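/- For all integers k ≥ 3 and r ≥ 2 it holds that h_r(k) = max{f(k), g_r(k)}. -/

import Mathlib

open Finset

def HyperUniform {V : Type*} (k : ℕ) (H : Finset (Finset V)) : Prop := ∀ e ∈ H, e.card = k

def IsPM {V : Type*} [Fintype V] (H M : Finset (Finset V)) : Prop :=
  M ⊆ H ∧ (∀ e ∈ M, ∀ f ∈ M, e ≠ f → Disjoint e f) ∧ ∀ v : V, ∃ e ∈ M, v ∈ e

def hdeg {V : Type*} [DecidableEq V] (H : Finset (Finset V)) (v : V) : ℕ :=
  (H.filter (fun e => v ∈ e)).card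

def IsVec (k r : ℕ) (a : ℕ → ℕ) : Prop :=
  (∀ i j : ℕ, i ≤ j → j < r → a i ≤ a j) ∧ (∑ i ∈ Finset.range r, a i) = k - 1

noncomputable def gfun (k r : ℕ) (a : ℕ → ℕ) : ℝ :=
  (((k - 1).factorial : ℝ) / (∏ i ∈ Finset.range r, ((a i).factorial : ℝ))) *
    (∏ i ∈ Finset.range r, (((r * a i + 1 : ℕ) : ℝ) / ((r * k : ℕ) : ℝ)) ^ (a i)) *
    (1 + ((a 0 : ℝ) / ((r * a 0 + 1 : ℕ) : ℝ)) *
      ∑ i ∈ Finset.Ico 1 r, ((r * a i + 1 : ℕ) : ℝ) / ((a i + 1 : ℕ) : ℝ))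

noncomputable def gThr (k r : ℕ) : ℝ :=
  sSup {x : ℝ | ∃ a : ℕ → ℕ, IsVec k r a ∧ x = gfun k r a}

noncomputable def mThr (k n : ℕ) : ℕ :=
  sInf {m : ℕ | ∀ H : Finset (Finset (Fin n)), HyperUniform k H →
    (∀ v : Fin n, m ≤ hdeg H v) → ∃ M, IsPM H M}

noncomputable def fThr (k : ℕ) : ℝ :=
  Filter.limsup (fun n : ℕ => (mThr k n : ℝ) / ((n - 1).choose (k - 1) : ℝ))
    (Filter.atTop ⊓ Filter.principal {n : ℕ | k ∣ n})

def DiscProp (k r : ℕ) (h : ℝ) : Prop :=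
  ∀ ε : ℝ, 0 < ε → ∃ δ : ℝ, 0 < δ ∧ ∃ n₀ : ℕ, ∀ n : ℕ, n₀ ≤ n → k ∣ n →
    ∀ H : Finset (Finset (Fin n)), HyperUniform k H →
      (∀ v : Fin n, (h + ε) * (((n - 1).choose (k - 1) : ℕ) : ℝ) ≤ (hdeg H v : ℝ)) →
      ∀ c : Finset (Fin n) → Fin r,
        ∃ M, IsPM H M ∧ ∃ i : Fin r,
          (n : ℝ) / ((r : ℝ) * (k : ℝ)) + δ * (n : ℝ) ≤
            ((M.filter (fun e => c e = i)).card : ℝ)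

noncomputable def hThr (k r : ℕ) : ℝ :=
  sInf {h : ℝ | 0 < h ∧ DiscProp k r h}



section basic
variable {V : Type*} [DecidableEq V]

def lnk (H : Finset (Finset V)) (v : V) : Finset (Finset V) :=
  (H.filter (fun e => v ∈ e)).image (fun e => e.erase v)

lemma mem_lnk {H : Finset (Finset V)} {v : V} {T : Finset V} :
    T ∈ lnk H v ↔ v ∉ T ∧ insert v T ∈ H := by
  unfold lnk
  simp only [mem_image, mem_filter]
  constructor
  · rintro ⟨e, ⟨he, hv⟩, rfl⟩
    exact ⟨by simp, by rwa [insert_erase hv]⟩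
  · rintro ⟨hv, h⟩
    exact ⟨insert v T, ⟨h, by simp⟩, erase_insert hv⟩

lemma card_lnk (H : Finset (Finset V)) (v : V) : (lnk H v).card = hdeg H v := by
  unfold lnk hdeg
  apply card_image_of_injOn
  intro e he f hf h
  simp only [coe_filter, Set.mem_ofPred_eq] at he hf
  have h' : e.erase v = f.erase v := h
  rw [← insert_erase he.2, ← insert_erase hf.2, h']

lemma lnk_card {k : ℕ} {H : Finset (Finset V)} (hH : HyperUniform k H) {v : V} {T : Finset V}
    (hT : T ∈ lnk H v) : T.card = k - 1 := by
  rw [mem_lnk] at hT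
  have := hH _ hT.2
  rw [card_insert_of_notMem hT.1] at this
  omega

lemma lnk_good [Fintype V] {k : ℕ} (hk : 2 ≤ k) {H : Finset (Finset V)} (hH : HyperUniform k H)
    (v : V) (Y : Finset V) :
    hdeg H v ≤ ((lnk H v).filter (fun T => Disjoint T Y)).card +
      Y.card * (Fintype.card V - 1).choose (k - 2) := by
  rw [← card_lnk, ← card_filter_add_card_filter_not (s := lnk H v) (fun T => Disjoint T Y)]
  gcongr
  have hsub : (lnk H v).filter (fun T => ¬ Disjoint T Y) ⊆
      Y.biUnion (fun y => ((univ.erase y).powersetCard (k - 2)).image (fun S => insert y S)) := by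
    intro T hT
    rw [mem_filter, not_disjoint_iff] at hT
    obtain ⟨hT, y, hyT, hyY⟩ := hT
    simp only [mem_biUnion, mem_image, mem_powersetCard]
    refine ⟨y, hyY, T.erase y, ⟨erase_subset_erase _ (subset_univ _), ?_⟩, insert_erase hyT⟩
    rw [card_erase_of_mem hyT, lnk_card hH hT]; omega
  refine (card_le_card hsub).trans ?_
  refine card_biUnion_le_card_mul _ _ _ ?_
  intro y _
  refine card_image_le.trans ?_
  rw [card_powersetCard, card_erase_of_mem (mem_univ _), card_univ]

def typ {r : ℕ} (p : V → Fin r) (T : Finset V) (l : Fin r) : ℕ := (T.filter (fun x => p x = l)).card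

lemma sum_typ {r : ℕ} (p : V → Fin r) (T : Finset V) : ∑ l, typ p T l = T.card := by
  unfold typ
  exact (card_eq_sum_card_fiberwise (fun x _ => mem_univ (p x))).symm

lemma typ_insert {r : ℕ} (p : V → Fin r) {T : Finset V} {v : V} (hv : v ∉ T) (l : Fin r) :
    typ p (insert v T) l = typ p T l + if p v = l then 1 else 0 := by
  unfold typ
  rw [filter_insert]
  split_ifs with h
  · rw [card_insert_of_notMem (by simp [hv])]
  · rfl

lemma card_typ {r : ℕ} (p : V → Fin r) (U : Finset V) (s : Fin r → ℕ) :
    (U.powerset.filter (fun T => ∀ l, typ p T l = s l)).card = ∏ l, (typ p U l).choose (s l) := by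
  have : ∏ l, (typ p U l).choose (s l) =
      (Fintype.piFinset (fun l => (U.filter (fun x => p x = l)).powersetCard (s l))).card := by
    rw [Fintype.card_piFinset]
    refine prod_congr rfl fun l _ => ?_
    rw [card_powersetCard]; rfl
  rw [this]
  refine card_nbij' (fun T l => T.filter (fun x => p x = l)) (fun F => univ.biUnion F) ?_ ?_ ?_ ?_
  · intro T hT
    simp only [coe_filter, mem_powerset, Set.mem_ofPred_eq] at hT
    simp only [mem_coe, Fintype.mem_piFinset, mem_powersetCard]
    exact fun l => ⟨filter_subset_filter _ hT.1, hT.2 l⟩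
  · intro F hF
    simp only [mem_coe, Fintype.mem_piFinset, mem_powersetCard] at hF
    simp only [coe_filter, mem_powerset, Set.mem_ofPred_eq]
    refine ⟨?_, ?_⟩
    · intro x hx
      simp only [mem_biUnion, mem_univ, true_and] at hx
      obtain ⟨l, hl⟩ := hx
      exact (mem_filter.1 ((hF l).1 hl)).1
    · intro l
      rw [← (hF l).2]
      unfold typ
      congr 1
      ext x
      simp only [mem_filter, mem_biUnion, mem_univ, true_and]
      constructor
      · rintro ⟨⟨l', hl'⟩, rfl⟩
        have := (mem_filter.1 ((hF l').1 hl')).2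
        rwa [this]
      · intro hx
        exact ⟨⟨l, hx⟩, (mem_filter.1 ((hF l).1 hx)).2⟩
  · intro T hT
    ext x
    simp
  · intro F hF
    simp only [mem_coe, Fintype.mem_piFinset, mem_powersetCard] at hF
    funext l
    ext x
    simp only [mem_filter, mem_biUnion, mem_univ, true_and]
    constructor
    · rintro ⟨⟨l', hl'⟩, rfl⟩
      have := (mem_filter.1 ((hF l').1 hl')).2
      rwa [this]
    · intro hx
      exact ⟨⟨l, hx⟩, (mem_filter.1 ((hF l).1 hx)).2⟩

end basic

lemma choose_pred_bound {k n : ℕ} (hk : 2 ≤ k) (hn : 2 * k ≤ n) :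
    ((n - 1).choose (k - 2) : ℝ) * n ≤ 2 * k * ((n - 1).choose (k - 1) : ℝ) := by
  have h := Nat.choose_succ_right_eq (n - 1) (k - 2)
  rw [show k - 2 + 1 = k - 1 by omega] at h
  have h2 : (n - 1).choose (k - 2) * n ≤ 2 * k * (n - 1).choose (k - 1) := by
    have : (n - 1).choose (k - 2) * n ≤ (n - 1).choose (k - 2) * (2 * (n - 1 - (k - 2))) := by
      gcongr; omega
    calc _ ≤ _ := this
      _ = 2 * ((n - 1).choose (k - 2) * (n - 1 - (k - 2))) := by ring
      _ = 2 * ((n - 1).choose (k - 1) * (k - 1)) := by rw [h]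
      _ ≤ 2 * ((n - 1).choose (k - 1) * k) := by gcongr; omega
      _ = _ := by ring
  exact_mod_cast h2

lemma pow_le_choose_eventually (k : ℕ) (hk : 1 ≤ k) (ν : ℝ) (hν : 0 < ν) :
    ∃ n₀ : ℕ, ∀ n ≥ n₀, (n : ℝ) ^ (k - 1) ≤
      (1 + ν) * ((k - 1).factorial * ((n - 1).choose (k - 1) : ℝ)) := by
  have hlim : Filter.Tendsto (fun n : ℕ => (1 + ν) * (1 - (k : ℝ) / n) ^ (k - 1)) Filter.atTop
      (nhds ((1 + ν) * (1 - 0) ^ (k - 1))) := by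
    refine Filter.Tendsto.const_mul _ ((Filter.Tendsto.const_sub _ ?_).pow _)
    exact tendsto_const_div_atTop_nhds_zero_nat _
  have h1 : (1 : ℝ) < (1 + ν) * (1 - 0) ^ (k - 1) := by simp [hν]
  obtain ⟨n₀, h⟩ := Filter.eventually_atTop.1 (hlim.eventually_const_lt h1)
  refine ⟨max n₀ (k + 1), fun n hn => ?_⟩
  have hn1 : n₀ ≤ n := le_trans (le_max_left _ _) hn
  have hn2 : k + 1 ≤ n := le_trans (le_max_right _ _) hn
  have hpos : (0 : ℝ) < n := by exact_mod_cast (by omega : 0 < n)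
  have h3 := Nat.pow_le_choose (α := ℝ) (k - 1) (n - 1)
  rw [div_le_iff₀ (by positivity)] at h3
  have h4 : ((n : ℝ) - k) ^ (k - 1) ≤ ((n - 1 + 1 - (k - 1) : ℕ) : ℝ) ^ (k - 1) := by
    have : ((n - k : ℕ) : ℝ) = (n : ℝ) - k := by push_cast [show k ≤ n by omega]; rfl
    rw [← this]
    gcongr <;> omega
  have h5 := h n hn1
  have h6 : (n : ℝ) ^ (k - 1) * (1 - (k : ℝ) / n) ^ (k - 1) = ((n : ℝ) - k) ^ (k - 1) := by
    rw [← mul_pow]; congr 1; field_simp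
  calc (n : ℝ) ^ (k - 1) ≤ (n : ℝ) ^ (k - 1) * ((1 + ν) * (1 - (k : ℝ) / n) ^ (k - 1)) := by
        nlinarith [pow_pos hpos (k - 1)]
    _ = (1 + ν) * ((n : ℝ) - k) ^ (k - 1) := by rw [← h6]; ring
    _ ≤ _ := by
      have := h4.trans h3
      have h7 : (0:ℝ) ≤ 1 + ν := by linarith
      calc _ ≤ (1 + ν) * (((n - 1).choose (k - 1) : ℝ) * ((k - 1).factorial : ℝ)) := by gcongr
        _ = _ := by ring

lemma choose_le_pow' (k n : ℕ) :
    ((k - 1).factorial * ((n - 1).choose (k - 1) : ℝ)) ≤ (n : ℝ) ^ (k - 1) := by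
  have h := Nat.choose_le_pow_div (α := ℝ) (k - 1) (n - 1)
  rw [le_div_iff₀ (by positivity)] at h
  have : ((n - 1 : ℕ) : ℝ) ^ (k - 1) ≤ (n : ℝ) ^ (k - 1) := by gcongr; omega
  linarith


lemma hdeg_le {V : Type*} [DecidableEq V] [Fintype V] {k : ℕ} {H : Finset (Finset V)}
    (hH : HyperUniform k H) (v : V) : hdeg H v ≤ (Fintype.card V - 1).choose (k - 1) := by
  rw [← card_lnk]
  have : lnk H v ⊆ (univ.erase v).powersetCard (k - 1) := by
    intro T hT
    rw [mem_powersetCard]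
    refine ⟨?_, lnk_card hH hT⟩
    intro x hx
    rw [mem_lnk] at hT
    simp only [mem_erase, mem_univ, and_true]
    rintro rfl
    exact hT.1 hx
  refine (card_le_card this).trans ?_
  rw [card_powersetCard, card_erase_of_mem (mem_univ _), card_univ]

lemma mThr_le (k n : ℕ) : mThr k n ≤ (n - 1).choose (k - 1) + 1 := by
  unfold mThr
  apply Nat.sInf_le
  intro H hH hd
  rcases Nat.eq_zero_or_pos n with rfl | hn
  · exact ⟨∅, by simp, by simp, fun v => v.elim0⟩
  · exfalso
    have h1 := hd ⟨0, hn⟩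
    have h2 := hdeg_le hH (⟨0, hn⟩ : Fin n)
    rw [Fintype.card_fin] at h2
    omega

lemma mThr_spec (k n : ℕ) (H : Finset (Finset (Fin n))) (hH : HyperUniform k H)
    (hd : ∀ v, mThr k n ≤ hdeg H v) : ∃ M, IsPM H M := by
  have hne : {m : ℕ | ∀ H : Finset (Finset (Fin n)), HyperUniform k H →
    (∀ v : Fin n, m ≤ hdeg H v) → ∃ M, IsPM H M}.Nonempty := by
    refine ⟨(n - 1).choose (k - 1) + 1, ?_⟩
    intro H hH hd
    rcases Nat.eq_zero_or_pos n with rfl | hn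
    · exact ⟨∅, by simp, by simp, fun v => v.elim0⟩
    · exfalso
      have h1 := hd ⟨0, hn⟩
      have h2 := hdeg_le hH (⟨0, hn⟩ : Fin n)
      rw [Fintype.card_fin] at h2
      omega
  exact Nat.sInf_mem hne H hH hd

lemma ratio_le_two (k n : ℕ) : (mThr k n : ℝ) / ((n - 1).choose (k - 1) : ℝ) ≤ 2 := by
  have h := mThr_le k n
  rcases Nat.eq_zero_or_pos ((n - 1).choose (k - 1)) with h0 | h0
  · rw [h0]; simp
  · rw [div_le_iff₀ (by exact_mod_cast h0)]
    have : mThr k n ≤ 2 * (n - 1).choose (k - 1) := by omega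
    exact_mod_cast this

lemma dvd_filter_neBot (k : ℕ) (hk : 1 ≤ k) :
    (Filter.atTop ⊓ Filter.principal {n : ℕ | k ∣ n}).NeBot := by
  rw [← Filter.frequently_mem_iff_neBot, Filter.frequently_atTop]
  intro a
  exact ⟨k * a, Nat.le_mul_of_pos_left _ (by omega), Dvd.intro _ rfl⟩

lemma ratio_bdd (k : ℕ) : Filter.IsBoundedUnder (· ≤ ·)
    (Filter.atTop ⊓ Filter.principal {n : ℕ | k ∣ n})
    (fun n : ℕ => (mThr k n : ℝ) / ((n - 1).choose (k - 1) : ℝ)) :=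
  Filter.isBoundedUnder_of ⟨2, fun n => ratio_le_two k n⟩

lemma ratio_cobdd (k : ℕ) (hk : 1 ≤ k) : Filter.IsCoboundedUnder (· ≤ ·)
    (Filter.atTop ⊓ Filter.principal {n : ℕ | k ∣ n})
    (fun n : ℕ => (mThr k n : ℝ) / ((n - 1).choose (k - 1) : ℝ)) := by
  have := dvd_filter_neBot k hk
  apply Filter.IsBoundedUnder.isCoboundedUnder_le
  exact Filter.isBoundedUnder_of ⟨0, fun n => by positivity⟩

lemma exists_pm_of_deg (k : ℕ) (ε : ℝ) (hε : 0 < ε) :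
    ∃ n₀ : ℕ, ∀ n ≥ n₀, k ∣ n → ∀ H : Finset (Finset (Fin n)), HyperUniform k H →
      (∀ v, (fThr k + ε) * ((n - 1).choose (k - 1) : ℝ) ≤ hdeg H v) → ∃ M, IsPM H M := by
  have h := Filter.eventually_lt_of_limsup_lt (b := fThr k + ε)
    (show Filter.limsup (fun n : ℕ => (mThr k n : ℝ) / ((n - 1).choose (k - 1) : ℝ))
    (Filter.atTop ⊓ Filter.principal {n : ℕ | k ∣ n}) < fThr k + ε by
      change fThr k < _; linarith) (ratio_bdd k)
  rw [Filter.eventually_inf_principal, Filter.eventually_atTop] at h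
  obtain ⟨n₀, h⟩ := h
  refine ⟨max n₀ k, fun n hn hd H hH hdeg => mThr_spec k n H hH fun v => ?_⟩
  have h1 := h n (le_trans (le_max_left _ _) hn) hd
  have hpos : 0 < (n - 1).choose (k - 1) :=
    Nat.choose_pos (by have := le_trans (le_max_right _ _) hn; omega)
  rw [div_lt_iff₀ (by exact_mod_cast hpos)] at h1
  exact_mod_cast (h1.le.trans (hdeg v))

lemma fThr_le_of_disc (k r : ℕ) (hk : 3 ≤ k) (hr : 2 ≤ r) (h : ℝ) (hh : 0 < h) (hD : DiscProp k r h) : fThr k ≤ h := by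
  apply le_of_forall_pos_le_add
  intro ε hε
  obtain ⟨δ, hδ, n₀, hn₀⟩ := hD (ε / 2) (by linarith)
  unfold fThr
  refine Filter.limsup_le_of_le (ratio_cobdd k (by omega)) ?_
  rw [Filter.eventually_inf_principal, Filter.eventually_atTop]
  obtain ⟨N, hN⟩ := exists_nat_gt (2 / ε)
  refine ⟨max n₀ (N + k), fun n hn hdvd => ?_⟩
  have hn1 : n₀ ≤ n := le_trans (le_max_left _ _) hn
  have hn2 : N + k ≤ n := le_trans (le_max_right _ _) hn
  have hC : N ≤ (n - 1).choose (k - 1) := by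
    calc N ≤ n - 1 - (k - 1) + 1 := by omega
      _ ≤ (n - 1).choose (k - 1) := by
        have := Nat.pow_le_choose (α := ℝ) (k - 1) (n - 1)
        have h2 : ∀ m j : ℕ, 1 ≤ j → m + 1 ≤ (m + j).choose j := by
          intro m j hj
          induction j with
          | zero => omega
          | succ j ih =>
            rcases Nat.eq_zero_or_pos j with rfl | hj
            · simp
            · rw [← add_assoc, Nat.choose_succ_succ]
              have := ih hj
              omega
        have h3 := h2 (n - 1 - (k - 1)) (k - 1) (by omega)
        rwa [show n - 1 - (k - 1) + (k - 1) = n - 1 by omega] at h3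
  have hC' : 2 / ε < ((n - 1).choose (k - 1) : ℝ) := lt_of_lt_of_le hN (by exact_mod_cast hC)
  have hpos : (0 : ℝ) < ((n - 1).choose (k - 1) : ℝ) := lt_trans (by positivity) hC'
  rw [div_le_iff₀ hpos]
  have hm : mThr k n ≤ ⌈(h + ε / 2) * ((n - 1).choose (k - 1) : ℝ)⌉₊ := by
    apply Nat.sInf_le
    intro H hH hd
    obtain ⟨M, hM, -⟩ := hn₀ n hn1 hdvd H hH
      (fun v => (Nat.le_ceil _).trans (by exact_mod_cast hd v)) (fun _ => ⟨0, by omega⟩)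
    exact ⟨M, hM⟩
  have hc := Nat.ceil_lt_add_one (a := (h + ε / 2) * ((n - 1).choose (k - 1) : ℝ)) (by positivity)
  have hm' : (mThr k n : ℝ) ≤ (⌈(h + ε / 2) * ((n - 1).choose (k - 1) : ℝ)⌉₊ : ℝ) := by
    exact_mod_cast hm
  rw [div_lt_iff₀ hε] at hC'
  nlinarith

lemma exists_pm_on (k : ℕ) (ε : ℝ) (hε : 0 < ε) :
    ∃ n₀ : ℕ, ∀ (n : ℕ) (U : Finset (Fin n)), n₀ ≤ U.card → k ∣ U.card →
      ∀ H : Finset (Finset (Fin n)), HyperUniform k H →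
      (∀ v ∈ U, (fThr k + ε) * ((U.card - 1).choose (k - 1) : ℝ) ≤
        (((lnk H v).filter (fun T => Disjoint T Uᶜ)).card : ℝ)) →
      ∃ M ⊆ H, (∀ e ∈ M, ∀ f ∈ M, e ≠ f → Disjoint e f) ∧ M.biUnion id = U := by
  obtain ⟨n₀, hn₀⟩ := exists_pm_of_deg k ε hε
  refine ⟨n₀, fun n U hU hdvd H hH hd => ?_⟩
  set φ : Fin U.card ↪ Fin n := (U.orderEmbOfFin rfl).toEmbedding with hφ
  have hφU : ∀ x, φ x ∈ U := fun x => U.orderEmbOfFin_mem rfl x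
  have hφs : ∀ y ∈ U, ∃ x, φ x = y := by
    intro y hy
    have := U.range_orderEmbOfFin rfl
    have hy' : y ∈ Set.range (U.orderEmbOfFin rfl) := by rw [this]; exact hy
    exact hy'
  set H' : Finset (Finset (Fin U.card)) := univ.filter (fun e => e.map φ ∈ H) with hH'
  have hu : HyperUniform k H' := by
    intro e he
    rw [hH', mem_filter] at he
    rw [← hH _ he.2, card_map]
  obtain ⟨M, hM1, hM2, hM3⟩ := hn₀ U.card hU hdvd H' hu (by
    intro v
    refine (hd (φ v) (hφU v)).trans ?_
    rw [← card_lnk]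
    have hsub : (lnk H (φ v)).filter (fun T => Disjoint T Uᶜ) ⊆
        (lnk H' v).image (fun T => T.map φ) := by
      intro T hT
      rw [mem_filter, mem_lnk] at hT
      obtain ⟨⟨h1, h2⟩, h3⟩ := hT
      rw [mem_image]
      have hTm : (univ.filter (fun x => φ x ∈ T)).map φ = T := by
        ext y
        simp only [mem_map, mem_filter, mem_univ, true_and]
        constructor
        · rintro ⟨x, hx, rfl⟩; exact hx
        · intro hy
          have hyU : y ∈ U := by
            by_contra hc
            exact disjoint_left.1 h3 hy (mem_compl.2 hc)
          obtain ⟨x, rfl⟩ := hφs y hyU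
          exact ⟨x, hy, rfl⟩
      refine ⟨univ.filter (fun x => φ x ∈ T), ?_, hTm⟩
      rw [mem_lnk]
      refine ⟨by simpa using h1, ?_⟩
      rw [hH', mem_filter]
      refine ⟨mem_univ _, ?_⟩
      rw [map_insert, hTm]
      exact h2
    exact_mod_cast (card_le_card hsub).trans card_image_le)
  refine ⟨M.image (fun e => e.map φ), ?_, ?_, ?_⟩
  · intro e he
    rw [mem_image] at he
    obtain ⟨e', he', rfl⟩ := he
    exact (mem_filter.1 (hM1 he')).2
  · intro e he f hf hne
    rw [mem_image] at he hf
    obtain ⟨e', he', rfl⟩ := he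
    obtain ⟨f', hf', rfl⟩ := hf
    rw [disjoint_map]
    exact hM2 e' he' f' hf' (fun h => hne (by rw [h]))
  · ext y
    simp only [mem_biUnion, mem_image, id]
    constructor
    · rintro ⟨_, ⟨e', he', rfl⟩, hy⟩
      rw [mem_map] at hy
      obtain ⟨x, -, rfl⟩ := hy
      exact hφU x
    · intro hy
      obtain ⟨x, rfl⟩ := hφs y hy
      obtain ⟨e, he, hx⟩ := hM3 x
      exact ⟨_, ⟨e, he, rfl⟩, mem_map_of_mem _ hx⟩

lemma fThr_ge (k : ℕ) (hk : 3 ≤ k) : 1 - (1 - 1 / (k : ℝ)) ^ (k - 1) ≤ fThr k := by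
  by_contra hlt
  push Not at hlt
  set L : ℝ := (1 - 1 / (k : ℝ)) ^ (k - 1) with hL
  set ε := (1 - L - fThr k) / 2 with hε
  have hεp : 0 < ε := by rw [hε]; linarith
  have hkpos : (0 : ℝ) < k := by exact_mod_cast (by omega : 0 < k)
  have hLp : 0 < L := by
    rw [hL]; apply pow_pos
    rw [sub_pos, div_lt_one hkpos]; exact_mod_cast (by omega : 1 < k)
  obtain ⟨n₀, hn₀⟩ := exists_pm_of_deg k ε hεp
  obtain ⟨n₁, hn₁⟩ := pow_le_choose_eventually k (by omega) (ε / L) (by positivity)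
  -- choose n = k * m
  set m := n₀ + n₁ + k + 2 with hm
  have hkm : k * m = (k - 1) * m + m := by
    conv_lhs => rw [show k = (k - 1) + 1 by omega]
    ring
  have hnm : m ≤ k * m := Nat.le_mul_of_pos_left _ (by omega)
  set A : Finset (Fin (k * m)) := univ.filter (fun x => x.val < m - 1) with hA
  have hAc : A.card = m - 1 := by
    rw [hA, Fin.card_filter_val_lt]; omega
  set H : Finset (Finset (Fin (k * m))) := (univ.powersetCard k).filter (fun e => ¬ Disjoint e A)
    with hH
  have hu : HyperUniform k H := by
    intro e he
    rw [hH, mem_filter, mem_powersetCard] at he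
    exact he.1.2
  obtain ⟨M, hM1, hM2, hM3⟩ := hn₀ (k * m) (by omega) (Dvd.intro _ rfl) H hu (by
    intro v
    have h1 : (k * m - 1).choose (k - 1) ≤ hdeg H v + ((k - 1) * m).choose (k - 1) := by
      have hsub : (univ.erase v).powersetCard (k - 1) ⊆
          lnk H v ∪ ((univ.erase v) \ A).powersetCard (k - 1) := by
        intro T hT
        rw [mem_powersetCard] at hT
        rw [mem_union]
        have hv : v ∉ T := fun h => by simpa using hT.1 h
        by_cases hd : Disjoint (insert v T) A
        · right
          rw [mem_powersetCard]
          refine ⟨?_, hT.2⟩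
          rw [disjoint_insert_left] at hd
          exact subset_sdiff.2 ⟨hT.1, hd.2⟩
        · left
          rw [mem_lnk]
          refine ⟨hv, ?_⟩
          rw [hH, mem_filter, mem_powersetCard]
          refine ⟨⟨subset_univ _, ?_⟩, hd⟩
          rw [card_insert_of_notMem hv, hT.2]; omega
      by_cases hvA : v ∈ A
      · have hs2 : (univ.erase v).powersetCard (k - 1) ⊆ lnk H v := by
          intro T hT
          rw [mem_powersetCard] at hT
          have hv : v ∉ T := fun h => by simpa using hT.1 h
          rw [mem_lnk]
          refine ⟨hv, ?_⟩
          rw [hH, mem_filter, mem_powersetCard]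
          refine ⟨⟨subset_univ _, ?_⟩, ?_⟩
          · rw [card_insert_of_notMem hv, hT.2]; omega
          · rw [disjoint_insert_left]; tauto
        have := card_le_card hs2
        rw [card_powersetCard, card_erase_of_mem (mem_univ _), card_univ, Fintype.card_fin,
          card_lnk] at this
        omega
      · have := (card_le_card hsub).trans (card_union_le _ _)
        rw [card_powersetCard, card_powersetCard, card_erase_of_mem (mem_univ _), card_univ,
          Fintype.card_fin, card_lnk, card_sdiff_of_subset (by
            intro x hx
            rw [mem_erase]
            refine ⟨?_, mem_univ _⟩
            rintro rfl
            exact hvA hx), card_erase_of_mem (mem_univ _), card_univ, Fintype.card_fin, hAc] at this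
        rw [show k * m - 1 - (m - 1) = (k - 1) * m by omega] at this
        exact this
    have h2 := hn₁ (k * m) (by omega)
    have h3 := Nat.choose_le_pow_div (α := ℝ) (k - 1) ((k - 1) * m)
    rw [le_div_iff₀ (by positivity)] at h3
    have h4 : (((k - 1) * m : ℕ) : ℝ) ^ (k - 1) = L * ((k * m : ℕ) : ℝ) ^ (k - 1) := by
      rw [hL, ← mul_pow]
      congr 1
      push_cast [show 1 ≤ k by omega]
      field_simp
    rw [h4] at h3
    set C : ℝ := ((k * m - 1).choose (k - 1) : ℝ)
    have hfac : (0 : ℝ) < (k - 1).factorial := by positivity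
    have h5 : ((((k - 1) * m).choose (k - 1) : ℕ) : ℝ) ≤ (L + ε) * C := by
      have : ((((k - 1) * m).choose (k - 1) : ℕ) : ℝ) * (k - 1).factorial ≤
          (L + ε) * C * (k - 1).factorial := by
        calc _ ≤ _ := h3
          _ ≤ L * ((1 + ε / L) * ((k - 1).factorial * C)) := by gcongr
          _ = _ := by field_simp
      exact le_of_mul_le_mul_right this hfac
    have h6 : C ≤ hdeg H v + ((((k - 1) * m).choose (k - 1) : ℕ) : ℝ) := by
      change ((k * m - 1).choose (k - 1) : ℝ) ≤ _
      exact_mod_cast h1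
    have : fThr k = 1 - L - 2 * ε := by rw [hε]; ring
    rw [this]
    linarith)
  -- the matching has m edges each hitting A
  have hcover : M.biUnion id = univ := by
    ext x; simpa using hM3 x
  have hcard : k * m = M.card * k := by
    have h1 : (M.biUnion id).card = ∑ e ∈ M, e.card := by
      rw [card_biUnion]; · rfl
      intro e he f hf hne; exact hM2 e he f hf hne
    rw [hcover, card_univ, Fintype.card_fin, sum_const_nat (fun e he => hu e (hM1 he))] at h1
    exact h1
  have hMm : M.card = m := by
    have : k * M.card = k * m := by linarith
    exact Nat.eq_of_mul_eq_mul_left (by omega) this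
  have hle : M.card ≤ A.card := by
    have hex : ∀ e ∈ M, ∃ x ∈ A, x ∈ e := by
      intro e he
      have := (mem_filter.1 (hM1 he)).2
      rw [not_disjoint_iff] at this
      obtain ⟨x, h1, h2⟩ := this
      exact ⟨x, h2, h1⟩
    have hne : Nonempty (Fin (k * m)) := ⟨⟨0, by omega⟩⟩
    choose! f hf using hex
    refine card_le_card_of_injOn f (fun e he => (hf e he).1) ?_
    intro e he e' he' heq
    by_contra hne
    exact disjoint_left.1 (hM2 e he e' he' hne) (hf e he).2 (heq ▸ (hf e' he').2)
  omega


section gpart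
variable {r : ℕ}

noncomputable def rho (k : ℕ) (a : Fin r → ℕ) (l : Fin r) : ℝ := ((r : ℝ) * a l + 1) / ((r : ℝ) * k)

def sv (a : Fin r → ℕ) (j i : Fin r) : Fin r → ℕ :=
  fun l => a l + (if l = i then 1 else 0) - (if l = j then 1 else 0)

def Ij (a : Fin r → ℕ) (j : Fin r) : Finset (Fin r) := univ.filter (fun i => i = j ∨ 0 < a j)

noncomputable def Gm (s : Fin r → ℕ) (x : Fin r → ℝ) : ℝ := ∏ l, x l ^ s l / ((s l).factorial : ℝ)

noncomputable def Fp (k : ℕ) (a : Fin r → ℕ) (j : Fin r) (x : Fin r → ℝ) : ℝ :=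
  ((k - 1).factorial : ℝ) * ∑ i ∈ Ij a j, Gm (sv a j i) x

noncomputable def gF (k : ℕ) (a : Fin r → ℕ) (j : Fin r) : ℝ :=
  (((k - 1).factorial : ℝ) / (∏ i, ((a i).factorial : ℝ))) * (∏ i, rho k a i ^ a i) *
    (1 + ((a j : ℝ) / ((r : ℝ) * a j + 1)) *
      ∑ i ∈ univ.erase j, ((r : ℝ) * a i + 1) / ((a i : ℝ) + 1))

lemma sv_spec {a : Fin r → ℕ} {j i : Fin r} (h : i ∈ Ij a j) (l : Fin r) :
    sv a j i l + (if l = j then 1 else 0) = a l + (if l = i then 1 else 0) := by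
  unfold Ij at h
  rw [mem_filter] at h
  unfold sv
  by_cases hj : l = j
  · subst hj
    rcases h.2 with h | h
    · subst h; simp
    · simp; omega
  · simp [hj]

lemma Gm_succ (s : Fin r → ℕ) (i : Fin r) (x : Fin r → ℝ) :
    Gm (fun l => s l + if l = i then 1 else 0) x = Gm s x * (x i / ((s i : ℝ) + 1)) := by
  unfold Gm
  rw [← mul_prod_erase univ _ (mem_univ i), ← mul_prod_erase univ _ (mem_univ i)]
  have : ∏ l ∈ univ.erase i, x l ^ (s l + if l = i then 1 else 0) /
      (((s l + if l = i then 1 else 0 : ℕ)).factorial : ℝ) =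
      ∏ l ∈ univ.erase i, x l ^ s l / ((s l).factorial : ℝ) := by
    refine prod_congr rfl fun l hl => ?_
    rw [if_neg (ne_of_mem_erase hl)]; simp
  rw [this]
  simp only [if_true, pow_succ, Nat.factorial_succ]
  push_cast
  field_simp

lemma Gm_sv {a : Fin r → ℕ} {j i : Fin r} (hij : i ≠ j) (ha : 0 < a j) (x : Fin r → ℝ)
    (hx : x j ≠ 0) :
    Gm (sv a j i) x = Gm a x * (a j / x j * (x i / ((a i : ℝ) + 1))) := by
  have hmem : i ∈ Ij a j := by unfold Ij; simp [ha]
  have h1 := Gm_succ (sv a j i) j x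
  have h2 := Gm_succ a i x
  have h3 : (fun l => sv a j i l + if l = j then 1 else 0) = fun l => a l + if l = i then 1 else 0 :=
    funext fun l => sv_spec hmem l
  rw [h3, h2] at h1
  have h4 : (sv a j i j : ℝ) + 1 = a j := by
    have := sv_spec hmem j
    rw [if_pos rfl, if_neg (Ne.symm hij)] at this
    exact_mod_cast this
  rw [h4] at h1
  have ha' : (a j : ℝ) ≠ 0 := by exact_mod_cast ha.ne'
  have : Gm (sv a j i) x = Gm (sv a j i) x * (x j / a j) * (a j / x j) := by field_simp
  rw [this, ← h1]; ring

lemma sv_self (a : Fin r → ℕ) (j : Fin r) : sv a j j = a := by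
  funext l; unfold sv; simp

lemma rho_pos {k : ℕ} (hk : 1 ≤ k) (a : Fin r → ℕ) (l : Fin r) : 0 < rho k a l := by
  have : 0 < r := l.pos
  unfold rho; positivity

lemma Fp_rho {k : ℕ} (hk : 1 ≤ k) (a : Fin r → ℕ) (j : Fin r) : Fp k a j (rho k a) = gF k a j := by
  have hr : 0 < r := j.pos
  have hG : Gm a (rho k a) = (∏ i, rho k a i ^ a i) / (∏ i, ((a i).factorial : ℝ)) := by
    unfold Gm; rw [prod_div_distrib]
  unfold Fp gF
  have hj : j ∈ Ij a j := by unfold Ij; simp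
  rw [← add_sum_erase _ _ hj, sv_self]
  have hs : ∑ i ∈ (Ij a j).erase j, Gm (sv a j i) (rho k a) =
      Gm a (rho k a) * (((a j : ℝ) / ((r : ℝ) * a j + 1)) *
      ∑ i ∈ univ.erase j, ((r : ℝ) * a i + 1) / ((a i : ℝ) + 1)) := by
    rcases Nat.eq_zero_or_pos (a j) with h0 | h0
    · have : (Ij a j).erase j = ∅ := by
        unfold Ij; ext i; simp [h0]
      rw [this]; simp [h0]
    · have : (Ij a j).erase j = univ.erase j := by
        unfold Ij; ext i; simp [h0]
      rw [this, mul_sum, mul_sum]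
      refine sum_congr rfl fun i hi => ?_
      rw [Gm_sv (ne_of_mem_erase hi) h0 _ (rho_pos hk a j).ne']
      congr 1
      unfold rho
      field_simp
  rw [hs, hG]; ring

lemma gF_min {k : ℕ} (hr : 2 ≤ r) (hk : 1 ≤ k) (a : Fin r → ℕ) (j₀ j : Fin r)
    (hmin : ∀ l, a j₀ ≤ a l) : gF k a j₀ ≤ gF k a j := by
  by_cases hj : j = j₀
  · rw [hj]
  unfold gF
  have hpre : 0 ≤ (((k - 1).factorial : ℝ) / (∏ i, ((a i).factorial : ℝ))) *
      (∏ i, rho k a i ^ a i) := by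
    have : ∀ i, 0 ≤ rho k a i ^ a i := fun i => pow_nonneg (rho_pos hk a i).le _
    have := prod_nonneg (fun i (_ : i ∈ (univ : Finset (Fin r))) => this i)
    positivity
  refine mul_le_mul_of_nonneg_left ?_ hpre
  set q : Fin r → ℝ := fun i => ((r : ℝ) * a i + 1) / ((a i : ℝ) + 1) with hq
  have hR : (2 : ℝ) ≤ r := by exact_mod_cast hr
  have hqm : ∀ i, q j₀ ≤ q i := by
    intro i
    have : (a j₀ : ℝ) ≤ a i := by exact_mod_cast hmin i
    simp only [hq]
    rw [div_le_div_iff₀ (by positivity) (by positivity)]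
    nlinarith
  have hS : ((r : ℝ) - 1) * q j₀ ≤ ∑ i ∈ univ.erase j, q i := by
    have := card_nsmul_le_sum (univ.erase j) q (q j₀) (fun i _ => hqm i)
    rw [card_erase_of_mem (mem_univ _), card_univ, Fintype.card_fin, nsmul_eq_mul] at this
    rwa [Nat.cast_sub (by omega), Nat.cast_one] at this
  have hSj : ∑ i ∈ univ.erase j₀, q i = ∑ i ∈ univ.erase j, q i + q j - q j₀ := by
    have h1 := add_sum_erase univ q (mem_univ j)
    have h2 := add_sum_erase univ q (mem_univ j₀)
    linarith
  change 1 + _ * ∑ i ∈ univ.erase j₀, q i ≤ 1 + _ * ∑ i ∈ univ.erase j, q i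
  rw [hSj]
  set S := ∑ i ∈ univ.erase j, q i
  have hxy : (a j₀ : ℝ) ≤ a j := by exact_mod_cast hmin j
  have hq0 : q j₀ = ((r : ℝ) * a j₀ + 1) / ((a j₀ : ℝ) + 1) := rfl
  have hq1 : q j = ((r : ℝ) * a j + 1) / ((a j : ℝ) + 1) := rfl
  rw [hq0] at hS
  rw [hq0, hq1]
  have hx0 : (0 : ℝ) ≤ a j₀ := by positivity
  have hy0 : (0 : ℝ) ≤ a j := by positivity
  generalize (a j₀ : ℝ) = x at *
  generalize (a j : ℝ) = y at *
  generalize (r : ℝ) = R at *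
  have hd1 : 0 < R * x + 1 := by positivity
  have hd2 : 0 < R * y + 1 := by positivity
  have key : 0 ≤ (y - x) * (S * ((x + 1) * (y + 1)) + (R * y + 1) * (x + 1)
      - (R * x + 1) * (R * y + 1)) := by
    refine mul_nonneg (by linarith) ?_
    rw [mul_div_assoc', div_le_iff₀ (by positivity)] at hS
    have : (R - 1) * (R * x + 1) * (y + 1) ≤ S * (x + 1) * (y + 1) := by gcongr
    nlinarith [mul_nonneg hx0 hy0, mul_nonneg hx0 (sq_nonneg (R-1)), mul_nonneg hy0 (by linarith : 0 ≤ R - 1)]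
  have e : y / (R * y + 1) * S - x / (R * x + 1) * (S + (R * y + 1) / (y + 1) - (R * x + 1) / (x + 1))
      = (y - x) * (S * ((x + 1) * (y + 1)) + (R * y + 1) * (x + 1)
      - (R * x + 1) * (R * y + 1)) / ((R * x + 1) * (R * y + 1) * (x + 1) * (y + 1)) + 0 := by
    field_simp
    ring
  have : 0 ≤ y / (R * y + 1) * S - x / (R * x + 1) * (S + (R * y + 1) / (y + 1) - (R * x + 1) / (x + 1)) := by
    rw [e]; positivity
  linarith

end gpart


lemma gfun_eq_gF {k r : ℕ} (hr : 2 ≤ r) (a : ℕ → ℕ) :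
    gfun k r a = gF k (fun l : Fin r => a l) ⟨0, by omega⟩ := by
  unfold gfun gF rho
  have h1 : ∑ i ∈ Finset.Ico 1 r, ((r * a i + 1 : ℕ) : ℝ) / ((a i + 1 : ℕ) : ℝ) =
      ∑ i ∈ (univ : Finset (Fin r)).erase ⟨0, by omega⟩, ((r : ℝ) * a i + 1) / ((a i : ℝ) + 1) := by
    have h2 := add_sum_erase univ (fun i : Fin r => ((r : ℝ) * a i + 1) / ((a i : ℝ) + 1))
      (mem_univ (⟨0, by omega⟩ : Fin r))
    have h3 := Fin.sum_univ_eq_sum_range (fun i : ℕ => ((r : ℝ) * a i + 1) / ((a i : ℝ) + 1)) r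
    have h4 := sum_range_eq_add_Ico (fun i : ℕ => ((r : ℝ) * a i + 1) / ((a i : ℝ) + 1))
      (show 0 < r by omega)
    push_cast
    simp only at h2 h3 h4
    linarith
  rw [h1, Fin.prod_univ_eq_prod_range (fun i => ((a i).factorial : ℝ)),
    Fin.prod_univ_eq_prod_range (fun i => (((r : ℝ) * a i + 1) / ((r : ℝ) * k)) ^ a i)]
  push_cast
  rfl

lemma gF_perm {k r : ℕ} (a : Fin r → ℕ) (σ : Equiv.Perm (Fin r)) (j : Fin r) :
    gF k (fun l => a (σ l)) j = gF k a (σ j) := by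
  unfold gF rho
  rw [Equiv.prod_comp σ (fun i => ((a i).factorial : ℝ)),
    Equiv.prod_comp σ (fun i => (((r : ℝ) * a i + 1) / ((r : ℝ) * k)) ^ a i)]
  congr 3
  have h1 := add_sum_erase univ (fun i => ((r : ℝ) * a i + 1) / ((a i : ℝ) + 1)) (mem_univ (σ j))
  have h2 := add_sum_erase univ (fun i => ((r : ℝ) * a (σ i) + 1) / ((a (σ i) : ℝ) + 1)) (mem_univ j)
  have h3 := Equiv.sum_comp σ (fun i => ((r : ℝ) * a i + 1) / ((a i : ℝ) + 1))
  linarith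

lemma g_bdd (k r : ℕ) (hr : 2 ≤ r) (hk : 1 ≤ k) :
    BddAbove {x : ℝ | ∃ a : ℕ → ℕ, IsVec k r a ∧ x = gfun k r a} := by
  apply Set.Finite.bddAbove
  refine (Set.finite_range (fun a : Fin r → Fin k =>
    gF k (fun l => (a l : ℕ)) ⟨0, by omega⟩)).subset ?_
  rintro x ⟨a, ha, rfl⟩
  have hlt : ∀ l : Fin r, a l < k := by
    intro l
    have := single_le_sum (f := a) (fun i _ => Nat.zero_le _) (mem_range.2 l.isLt)
    rw [ha.2] at this
    omega
  exact ⟨fun l => ⟨a l, hlt l⟩, (gfun_eq_gF hr a).symm⟩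

lemma gF_le_gThr {k r : ℕ} (hr : 2 ≤ r) (hk : 1 ≤ k) (a : Fin r → ℕ) (ha : ∑ l, a l = k - 1)
    (j₀ : Fin r) (hmin : ∀ l, a j₀ ≤ a l) : gF k a j₀ ≤ gThr k r := by
  set σ := Tuple.sort a
  have hmono : Monotone (a ∘ σ) := Tuple.monotone_sort a
  refine (gF_min hr hk a j₀ (σ ⟨0, by omega⟩) hmin).trans ?_
  unfold gThr
  refine le_csSup (g_bdd k r hr hk) ?_
  refine ⟨fun i => if h : i < r then a (σ ⟨i, h⟩) else 0, ⟨?_, ?_⟩, ?_⟩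
  · intro i j hij hj
    simp only [hj, lt_of_le_of_lt hij hj, dif_pos]
    exact hmono (by simpa using hij)
  · rw [← ha, ← Equiv.sum_comp σ, ← Fin.sum_univ_eq_sum_range
      (fun i => if h : i < r then a (σ ⟨i, h⟩) else 0)]
    simp
  · rw [gfun_eq_gF hr, ← gF_perm]
    simp

lemma gThr_le {k r : ℕ} (hr : 2 ≤ r) (h : ℝ)
    (H : ∀ a : Fin r → ℕ, ∑ l, a l = k - 1 → ∀ j₀, (∀ l, a j₀ ≤ a l) → gF k a j₀ ≤ h) :
    gThr k r ≤ h := by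
  unfold gThr
  refine csSup_le ?_ ?_
  · refine ⟨_, fun i => if i = r - 1 then k - 1 else 0, ⟨?_, ?_⟩, rfl⟩
    · intro i j hij hj
      show (if i = r - 1 then k - 1 else 0) ≤ (if j = r - 1 then k - 1 else 0)
      split_ifs <;> omega
    · rw [sum_ite_eq' (range r) (r - 1)]
      simp; omega
  · rintro x ⟨a, ha, rfl⟩
    rw [gfun_eq_gF hr]
    refine H _ ?_ _ ?_
    · rw [Fin.sum_univ_eq_sum_range (fun i => a i)]; exact ha.2
    · intro l; exact ha.1 0 l (Nat.zero_le _) l.isLt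

lemma gThr_corner {k r : ℕ} (hr : 2 ≤ r) (hk : 1 ≤ k) :
    (1 - ((r : ℝ) - 1) / (r * k)) ^ (k - 1) ≤ gThr k r := by
  set j₁ : Fin r := ⟨1, by omega⟩
  set j₀ : Fin r := ⟨0, by omega⟩
  have hne : j₀ ≠ j₁ := by simp [j₀, j₁]
  set a : Fin r → ℕ := fun l => if l = j₁ then k - 1 else 0 with ha
  have h := gF_le_gThr hr hk a (by simp [ha]) j₀ (by intro l; simp [ha, hne])
  refine le_of_eq_of_le ?_ h
  have hr' : (0 : ℝ) < r := by exact_mod_cast (by omega : 0 < r)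
  have hk' : (0 : ℝ) < k := by exact_mod_cast hk
  unfold gF
  have h0 : a j₀ = 0 := by simp [ha, hne]
  have h1 : a j₁ = k - 1 := by simp [ha]
  have hp1 : ∏ i, ((a i).factorial : ℝ) = (k - 1).factorial := by
    rw [prod_eq_single j₁]
    · rw [h1]
    · intro b _ hb; simp [ha, hb]
    · simp
  have hp2 : ∏ i, rho k a i ^ a i = rho k a j₁ ^ (k - 1) := by
    rw [prod_eq_single j₁]
    · rw [h1]
    · intro b _ hb; simp [ha, hb]
    · simp
  rw [hp1, hp2, h0]
  have : ((k - 1).factorial : ℝ) ≠ 0 := by positivity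
  rw [div_self this]
  simp only [Nat.cast_zero, zero_div, zero_mul, add_zero, mul_one, one_mul]
  congr 1
  unfold rho
  rw [h1]
  push_cast [hk]
  field_simp
  ring

noncomputable def Ef (m : ℕ) (x : ℝ) : ℝ := x ^ m / (m.factorial : ℝ)

lemma Ef_nonneg (m : ℕ) {x : ℝ} (hx : 0 ≤ x) : 0 ≤ Ef m x := by unfold Ef; positivity

lemma Ef_succ (m : ℕ) (x : ℝ) : Ef (m + 1) x = Ef m x * (x / (m + 1)) := by
  unfold Ef
  rw [pow_succ, Nat.factorial_succ]; push_cast; field_simp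

lemma Ef_add (n : ℕ) (x y : ℝ) :
    Ef n (x + y) = ∑ m ∈ range (n + 1), Ef m x * Ef (n - m) y := by
  unfold Ef
  rw [add_pow, sum_div]
  refine sum_congr rfl fun m hm => ?_
  have hmn : m ≤ n := by rw [mem_range] at hm; omega
  have := Nat.choose_mul_factorial_mul_factorial hmn
  have h : (n.choose m : ℝ) * m.factorial * (n - m).factorial = n.factorial := by exact_mod_cast this
  rw [← h]
  have hc : (n.choose m : ℝ) ≠ 0 := by exact_mod_cast (Nat.choose_pos hmn).ne'
  field_simp

lemma Ef_half {s t : ℕ} (hs : 1 ≤ s) (ht : 1 ≤ t) {x y : ℝ} (hx : 0 ≤ x) (hy : 0 ≤ y) :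
    2 * (Ef s x * Ef t y) ≤ Ef (s + t) (x + y) := by
  obtain ⟨s, rfl⟩ := Nat.exists_eq_add_of_le' hs
  obtain ⟨t, rfl⟩ := Nat.exists_eq_add_of_le' ht
  have hsub : ({s, s + 1, s + 2} : Finset ℕ) ⊆ range (s + 1 + (t + 1) + 1) := by
    intro z hz; simp at hz; rw [mem_range]; omega
  have h3 : Ef s x * Ef (t + 2) y + (Ef (s + 1) x * Ef (t + 1) y + Ef (s + 2) x * Ef t y) ≤
      Ef (s + 1 + (t + 1)) (x + y) := by
    rw [Ef_add]
    refine le_trans (le_of_eq ?_) (sum_le_sum_of_subset_of_nonneg hsub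
      (fun i _ _ => mul_nonneg (Ef_nonneg _ hx) (Ef_nonneg _ hy)))
    rw [sum_insert (by simp), sum_insert (by simp), sum_singleton]
    congr 3
    · congr 1; omega
    · congr 1; omega
    · congr 1; omega
  have hP : 0 ≤ Ef s x * Ef (t + 2) y := mul_nonneg (Ef_nonneg _ hx) (Ef_nonneg _ hy)
  have hQ : 0 ≤ Ef (s + 2) x * Ef t y := mul_nonneg (Ef_nonneg _ hx) (Ef_nonneg _ hy)
  have hB : 0 ≤ Ef (s + 1) x * Ef (t + 1) y := mul_nonneg (Ef_nonneg _ hx) (Ef_nonneg _ hy)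
  have hlc : ∀ (m : ℕ) (z : ℝ), 0 ≤ z → Ef (m + 1) z ^ 2 ≤ 2 * (Ef m z * Ef (m + 2) z) := by
    intro m z hz
    have e1 : Ef m z * Ef (m + 2) z = Ef (m + 1) z ^ 2 * (((m : ℝ) + 1) / (m + 2)) := by
      rw [show m + 2 = m + 1 + 1 by rfl, Ef_succ (m + 1), Ef_succ m]
      push_cast; field_simp; ring
    have : (1 / 2 : ℝ) ≤ ((m : ℝ) + 1) / (m + 2) := by
      rw [div_le_div_iff₀ (by norm_num) (by positivity)]; linarith
    rw [e1]
    nlinarith [sq_nonneg (Ef (m + 1) z)]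
  have hPQ : (Ef (s + 1) x * Ef (t + 1) y) ^ 2 ≤
      4 * ((Ef s x * Ef (t + 2) y) * (Ef (s + 2) x * Ef t y)) := by
    calc _ = Ef (s + 1) x ^ 2 * Ef (t + 1) y ^ 2 := by ring
      _ ≤ (2 * (Ef s x * Ef (s + 2) x)) * (2 * (Ef t y * Ef (t + 2) y)) := by
        apply mul_le_mul (hlc s x hx) (hlc t y hy) (sq_nonneg _)
        have := Ef_nonneg s hx
        have := Ef_nonneg (s + 2) hx
        positivity
      _ = _ := by ring
  have : Ef (s + 1) x * Ef (t + 1) y ≤ Ef s x * Ef (t + 2) y + Ef (s + 2) x * Ef t y := by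
    apply le_of_sq_le_sq _ (by positivity)
    nlinarith [sq_nonneg (Ef s x * Ef (t + 2) y - Ef (s + 2) x * Ef t y)]
  linarith

lemma Ef_quarter {s t u : ℕ} (hs : 1 ≤ s) (ht : 1 ≤ t) (hu : 1 ≤ u) {x y z : ℝ} (hx : 0 ≤ x)
    (hy : 0 ≤ y) (hz : 0 ≤ z) :
    4 * (Ef s x * Ef t y * Ef u z) ≤ Ef (s + t + u) (x + y + z) := by
  have h1 := Ef_half ht hu hy hz
  have h2 := Ef_half hs (show 1 ≤ t + u by omega) hx (show 0 ≤ y + z by positivity)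
  rw [← add_assoc, ← add_assoc] at h2
  have h3 := mul_le_mul_of_nonneg_left h1 (Ef_nonneg s hx)
  linarith

lemma pow_bound (m : ℕ) (hm : 4 ≤ m) : (1 - 1 / ((m : ℝ) + 1)) ^ m ≤ 5 / 12 := by
  have hm' : (4 : ℝ) ≤ m := by exact_mod_cast hm
  have hmp : (0 : ℝ) < m := by linarith
  have h1 : (1 - 1 / ((m : ℝ) + 1)) = (1 / (m : ℝ) + 1)⁻¹ := by field_simp; ring
  have h2 : (12 / 5 : ℝ) ≤ (1 / (m : ℝ) + 1) ^ m := by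
    rw [add_pow]
    have hsub : ({0, 1, 2, 3} : Finset ℕ) ⊆ range (m + 1) := by
      intro z hz; simp at hz; rw [mem_range]; omega
    refine le_trans ?_ (sum_le_sum_of_subset_of_nonneg hsub (fun i _ _ => by positivity))
    rw [sum_insert (by simp), sum_insert (by simp), sum_insert (by simp), sum_singleton]
    have c2 : (m.choose 2 : ℝ) = m * (m - 1) / 2 := by rw [Nat.cast_choose_two]
    have c3 : (m.choose 3 : ℝ) = m * (m - 1) * (m - 2) / 6 := by
      have := Nat.choose_succ_right_eq m 2
      have h : (m.choose 3 : ℝ) * 3 = m.choose 2 * ((m : ℝ) - 2) := by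
        have h' : ((m.choose 3 * 3 : ℕ) : ℝ) = ((m.choose 2 * (m - 2) : ℕ) : ℝ) := by rw [← this]
        push_cast [show 2 ≤ m by omega] at h'
        exact h'
      rw [c2] at h; linarith
    rw [c2, c3]
    simp only [one_pow, mul_one, pow_zero, Nat.choose_zero_right, Nat.cast_one, Nat.choose_one_right, pow_one]
    have : (1 : ℝ) + (1 / (m : ℝ) * m + ((1 / (m : ℝ)) ^ 2 * (m * (m - 1) / 2) + (1 / (m : ℝ)) ^ 3 * (m * (m - 1) * (m - 2) / 6))) =
       (2 * (6 * m ^ 2) + 3 * m * (m - 1) + (m - 1) * (m - 2)) / (6 * m ^ 2) := by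
      field_simp
      ring
    rw [this, div_le_div_iff₀ (by norm_num) (by positivity)]
    nlinarith
  rw [h1, inv_pow]
  calc _ ≤ (12 / 5 : ℝ)⁻¹ := by gcongr
    _ = 5 / 12 := by norm_num

lemma fThr_ge_big (k : ℕ) (hk : 5 ≤ k) : 7 / 12 ≤ fThr k := by
  have h := fThr_ge k (by omega)
  have h2 := pow_bound (k - 1) (by omega)
  rw [show ((k - 1 : ℕ) : ℝ) + 1 = k by push_cast [show 1 ≤ k by omega]; ring] at h2
  linarith

lemma fThr_ge_half (k : ℕ) (hk : 3 ≤ k) : 1 / 2 ≤ fThr k := by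
  rcases (by omega : k = 3 ∨ k = 4 ∨ 5 ≤ k) with rfl | rfl | h
  · have := fThr_ge 3 (by omega); norm_num at this; linarith
  · have := fThr_ge 4 (by omega); norm_num at this; linarith
  · linarith [fThr_ge_big k h]


lemma typ_biUnion {V : Type*} [DecidableEq V] {r : ℕ} (p : V → Fin r) (M : Finset (Finset V))
    (hM : ∀ e ∈ M, ∀ f ∈ M, e ≠ f → Disjoint e f) (l : Fin r) :
    typ p (M.biUnion id) l = ∑ e ∈ M, typ p e l := by
  unfold typ
  rw [filter_biUnion, card_biUnion]
  · rfl
  · intro e he f hf hne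
    exact disjoint_filter_filter (hM e he f hf hne)

lemma card_biUnion_unif {V : Type*} [DecidableEq V] {k : ℕ} (M : Finset (Finset V))
    (hM : ∀ e ∈ M, ∀ f ∈ M, e ≠ f → Disjoint e f) (hu : ∀ e ∈ M, e.card = k) :
    (M.biUnion id).card = M.card * k := by
  rw [card_biUnion]
  · exact sum_const_nat hu
  · exact hM

lemma typ_mono {V : Type*} {r : ℕ} (p : V → Fin r) {S T : Finset V} (h : S ⊆ T) (l : Fin r) :
    typ p S l ≤ typ p T l := card_le_card (filter_subset_filter _ h)

lemma Gm_scale {r : ℕ} (s : Fin r → ℕ) (c : ℝ) (x : Fin r → ℝ) :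
    Gm s (fun l => c * x l) = c ^ (∑ l, s l) * Gm s x := by
  unfold Gm
  rw [← prod_pow_eq_pow_sum, ← prod_mul_distrib]
  refine prod_congr rfl fun l _ => ?_
  rw [mul_pow]; ring

lemma sum_sv {r : ℕ} {a : Fin r → ℕ} {j i : Fin r} (h : i ∈ Ij a j) :
    ∑ l, sv a j i l = ∑ l, a l := by
  have := sum_congr (rfl : (univ : Finset (Fin r)) = univ) (fun l _ => sv_spec h l)
  rw [sum_add_distrib, sum_add_distrib] at this
  simpa using this

lemma sv_inj {r : ℕ} {a : Fin r → ℕ} {j i i' : Fin r} (h : i ∈ Ij a j) (h' : i' ∈ Ij a j)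
    (he : sv a j i = sv a j i') : i = i' := by
  have h1 := sv_spec h i
  have h2 := sv_spec h' i
  rw [he] at h1
  rw [h1] at h2
  by_contra hne
  simp [hne] at h2

lemma Fp_continuous {r : ℕ} (k : ℕ) (a : Fin r → ℕ) (j : Fin r) : Continuous (Fp k a j) := by
  unfold Fp Gm
  fun_prop

lemma exists_partition {r n : ℕ} (sz : Fin r → ℕ) (h : ∑ l, sz l = n) :
    ∃ p : Fin n → Fin r, ∀ l, typ p univ l = sz l := by
  have hc : Fintype.card (Fin n) = Fintype.card (Σ l : Fin r, Fin (sz l)) := by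
    simp [h]
  obtain ⟨E⟩ : Nonempty (Fin n ≃ Σ l : Fin r, Fin (sz l)) := ⟨Fintype.equivOfCardEq hc⟩
  refine ⟨fun x => (E x).1, fun l => ?_⟩
  unfold typ
  have h2 : (univ : Finset (Fin (sz l))).card = sz l := by simp
  conv_rhs => rw [← h2]
  symm
  refine card_bij (fun y _ => E.symm ⟨l, y⟩) ?_ ?_ ?_
  · intro y _
    simp
  · intro y _ y' _ hyy
    have := E.symm.injective hyy
    simpa using this
  · intro x hx
    rw [mem_filter] at hx
    obtain ⟨-, hx⟩ := hx
    subst hx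
    exact ⟨(E x).2, mem_univ _, by simp⟩

lemma gF_le_of_disc {k r : ℕ} (hk : 3 ≤ k) (hr : 2 ≤ r) (h : ℝ) (hh : 0 < h)
    (hD : DiscProp k r h) (a : Fin r → ℕ) (ha : ∑ l, a l = k - 1) (j₀ : Fin r)
    (hmin : ∀ l, a j₀ ≤ a l) : gF k a j₀ ≤ h := by
  by_contra hlt
  push Not at hlt
  set ε := (gF k a j₀ - h) / 2 with hε
  have hεp : 0 < ε := by rw [hε]; linarith
  obtain ⟨δ, hδ, n₀, hn₀⟩ := hD ε hεp
  have hr0 : (0 : ℝ) < r := by exact_mod_cast (by omega : 0 < r)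
  have hk0 : (0 : ℝ) < k := by exact_mod_cast (by omega : 0 < k)
  have hev : ∀ j : Fin r, ∀ᶠ m : ℕ in Filter.atTop,
      h + ε < Fp k a j (fun l => rho k a l - (1 / r) / m) := by
    intro j
    have ht : Filter.Tendsto (fun m : ℕ => fun l => rho k a l - (1 / (r : ℝ)) / m) Filter.atTop
        (nhds (rho k a)) := by
      rw [tendsto_pi_nhds]
      intro l
      have := (tendsto_const_div_atTop_nhds_zero_nat (1 / (r : ℝ))).const_sub (rho k a l)
      simpa using this
    have h2 := ((Fp_continuous k a j).tendsto (rho k a)).comp ht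
    refine h2.eventually_const_lt ?_
    rw [Fp_rho (by omega)]
    have := gF_min hr (show 1 ≤ k by omega) a j₀ j hmin
    have : h + 2 * ε = gF k a j₀ := by rw [hε]; ring
    linarith
  have hev2 := Filter.eventually_all.2 hev
  obtain ⟨m, hm1, hm2⟩ := (hev2.and (Filter.eventually_ge_atTop (n₀ + k + 1))).exists
  have hm0 : (0 : ℝ) < m := by exact_mod_cast (by omega : 0 < m)
  set n := r * k * m with hn
  have hnm : m ≤ n := by
    rw [hn]; exact Nat.le_mul_of_pos_left _ (by positivity)
  obtain ⟨p, hp⟩ := exists_partition (n := n) (fun l => (r * a l + 1) * m) (by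
    rw [← sum_mul, sum_add_distrib, ← mul_sum, ha]
    simp only [sum_const, card_univ, Fintype.card_fin, smul_eq_mul, mul_one]
    rw [hn]; congr 1
    conv_rhs => rw [show k = (k - 1) + 1 by omega]
    ring)
  set H : Finset (Finset (Fin n)) :=
    univ.filter (fun e => ∃ i, ∀ l, typ p e l = a l + if l = i then 1 else 0) with hH
  have hu : HyperUniform k H := by
    intro e he
    rw [hH, mem_filter] at he
    obtain ⟨-, i, hi⟩ := he
    rw [← sum_typ p e, sum_congr rfl (fun l _ => hi l), sum_add_distrib, ha]
    simp; omega
  classical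
  set c : Finset (Fin n) → Fin r := fun e =>
    if h : ∃ i, ∀ l, typ p e l = a l + if l = i then 1 else 0 then h.choose else j₀ with hc
  have hcs : ∀ e ∈ H, ∀ l, typ p e l = a l + if l = c e then 1 else 0 := by
    intro e he
    have he' := (mem_filter.1 he).2
    simp only [hc, dif_pos he']
    exact he'.choose_spec
  obtain ⟨M, ⟨hM1, hM2, hM3⟩, i, hi⟩ := hn₀ n (by omega) (by rw [hn]; exact ⟨r * m, by ring⟩) H hu (by
    intro v
    set j := p v with hj
    have hdg : ∑ i ∈ Ij a j, ∏ l, (typ p (univ.erase v) l).choose (sv a j i l) ≤ hdeg H v := by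
      rw [← card_lnk]
      have : ∀ i ∈ Ij a j, ∏ l, (typ p (univ.erase v) l).choose (sv a j i l) =
          ((univ.erase v).powerset.filter (fun T => ∀ l, typ p T l = sv a j i l)).card :=
        fun i _ => (card_typ p _ _).symm
      rw [sum_congr rfl this, ← card_biUnion]
      · apply card_le_card
        intro T hT
        rw [mem_biUnion] at hT
        obtain ⟨i, hi, hT⟩ := hT
        rw [mem_filter, mem_powerset] at hT
        have hv : v ∉ T := fun h => by simpa using hT.1 h
        rw [mem_lnk]
        refine ⟨hv, ?_⟩
        rw [hH, mem_filter]
        refine ⟨mem_univ _, i, fun l => ?_⟩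
        rw [typ_insert p hv, hT.2 l, ← sv_spec hi l]
        congr 1
        simp only [← hj, eq_comm]
      · intro i hi i' hi' hne
        rw [Function.onFun, disjoint_left]
        intro T hT hT'
        rw [mem_filter] at hT hT'
        apply hne
        apply sv_inj hi hi'
        funext l
        rw [← hT.2 l, hT'.2 l]
    set x : Fin r → ℝ := fun l => rho k a l - (1 / r) / m with hx
    have hnx : ∀ l, (n : ℝ) * x l = (((r * a l + 1) * m : ℕ) : ℝ) - k := by
      intro l
      simp only [hx, hn, rho]
      push_cast
      field_simp
    have hszk : ∀ l, k ≤ (r * a l + 1) * m := fun l =>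
      le_trans (by omega) (Nat.le_mul_of_pos_left m (Nat.succ_pos _))
    have hnx0 : ∀ l, 0 ≤ (n : ℝ) * x l := by
      intro l; rw [hnx l, sub_nonneg]; exact_mod_cast hszk l
    have hGm : ∀ i ∈ Ij a j, (n : ℝ) ^ (k - 1) * Gm (sv a j i) x ≤
        ((∏ l, (typ p (univ.erase v) l).choose (sv a j i l) : ℕ) : ℝ) := by
      intro i hi
      rw [← ha, ← sum_sv hi, ← Gm_scale]
      unfold Gm
      push_cast
      refine prod_le_prod (fun l _ => by have := hnx0 l; positivity) (fun l _ => ?_)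
      refine le_trans ?_ (Nat.pow_le_choose (α := ℝ) _ _)
      have := hnx0 l
      have hsl : sv a j i l ≤ k - 1 := by
        rw [← ha, ← sum_sv hi]
        exact single_le_sum (f := sv a j i) (fun _ _ => Nat.zero_le _) (mem_univ l)
      gcongr
      rw [hnx l]
      have h1 : (r * a l + 1) * m ≤ typ p (univ.erase v) l + 1 := by
        rw [← hp l]
        have := typ_insert p (notMem_erase v univ) l
        rw [insert_erase (mem_univ v)] at this
        rw [this]; split_ifs <;> omega
      have h2 : (r * a l + 1) * m - k ≤ typ p (univ.erase v) l + 1 - sv a j i l := by omega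
      rw [← Nat.cast_sub (hszk l)]
      exact_mod_cast h2
    have h3 : (n : ℝ) ^ (k - 1) * ∑ i ∈ Ij a j, Gm (sv a j i) x ≤ hdeg H v := by
      rw [mul_sum]
      refine (sum_le_sum hGm).trans ?_
      rw [← Nat.cast_sum]
      exact_mod_cast hdg
    have h4 : h + ε < Fp k a j x := hm1 j
    unfold Fp at h4
    have hfac : (0 : ℝ) < (k - 1).factorial := by positivity
    have hS : 0 ≤ ∑ i ∈ Ij a j, Gm (sv a j i) x := by
      by_contra hneg
      push Not at hneg
      have := mul_neg_of_pos_of_neg hfac hneg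
      linarith
    calc (h + ε) * ((n - 1).choose (k - 1) : ℝ)
        ≤ ((k - 1).factorial * ∑ i ∈ Ij a j, Gm (sv a j i) x) * ((n - 1).choose (k - 1) : ℝ) := by
          gcongr
      _ = ((k - 1).factorial * ((n - 1).choose (k - 1) : ℝ)) * ∑ i ∈ Ij a j, Gm (sv a j i) x := by
          ring
      _ ≤ (n : ℝ) ^ (k - 1) * ∑ i ∈ Ij a j, Gm (sv a j i) x := by
          gcongr
          exact choose_le_pow' k n
      _ ≤ _ := h3) c
  -- count colors
  have hcover : M.biUnion id = univ := by
    ext x; simpa using hM3 x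
  have hMc : M.card = r * m := by
    have h1 := card_biUnion_unif M hM2 (fun e he => hu e (hM1 he))
    rw [hcover, card_univ, Fintype.card_fin] at h1
    have : k * M.card = k * (r * m) := by rw [mul_comm, ← h1, hn]; ring
    exact Nat.eq_of_mul_eq_mul_left (by omega) this
  have h1 := typ_biUnion p M hM2 i
  rw [hcover, hp i, sum_congr rfl (fun e he => hcs e (hM1 he) i), sum_add_distrib, sum_const,
    hMc, smul_eq_mul, ← card_filter] at h1
  have h2 : (M.filter (fun e => i = c e)).card = m := by nlinarith
  have h3 : (M.filter (fun e => c e = i)).card = m := by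
    rw [← h2]; congr 1; ext e; simp [eq_comm]
  rw [h3] at hi
  have : (n : ℝ) / (r * k) = m := by
    rw [hn]; push_cast; field_simp
  rw [this] at hi
  have : 0 < δ * n := by
    apply mul_pos hδ; exact_mod_cast (by omega : 0 < n)
  linarith


/-- integer unit vector -/
def EI {r : ℕ} (i : Fin r) : Fin r → ℤ := fun l => if i = l then 1 else 0

lemma greedy_sets {V ι : Type*} [DecidableEq V] [DecidableEq ι] (P : ι → Finset V → Prop)
    (k m : ℕ) (X0 : Finset V) (s : Finset ι)
    (hP : ∀ i ∈ s, ∀ X : Finset V, X.card ≤ m → ∃ T, P i T ∧ Disjoint T X ∧ T.card ≤ k)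
    (hm : X0.card + s.card * k ≤ m) :
    ∃ T : ι → Finset V, (∀ i ∈ s, P i (T i) ∧ Disjoint (T i) X0 ∧ (T i).card ≤ k) ∧
      ∀ i ∈ s, ∀ j ∈ s, i ≠ j → Disjoint (T i) (T j) := by
  induction s using Finset.induction_on with
  | empty => exact ⟨fun _ => ∅, by simp, by simp⟩
  | insert x s hx ih =>
    rw [card_insert_of_notMem hx] at hm
    obtain ⟨T, hT1, hT2⟩ := ih (fun i hi => hP i (mem_insert_of_mem hi)) (by nlinarith)
    obtain ⟨Tx, h1, h2, h3⟩ := hP x (mem_insert_self _ _) (X0 ∪ s.biUnion T) (by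
      refine (card_union_le _ _).trans ?_
      have : (s.biUnion T).card ≤ s.card * k :=
        card_biUnion_le_card_mul _ _ _ (fun i hi => (hT1 i hi).2.2)
      nlinarith)
    rw [disjoint_union_right, disjoint_biUnion_right] at h2
    refine ⟨Function.update T x Tx, ?_, ?_⟩
    · intro i hi
      rw [mem_insert] at hi
      by_cases hix : i = x
      · subst hix; simp [h1, h2.1, h3]
      · rw [Function.update_of_ne hix]
        exact hT1 i (hi.resolve_left hix)
    · intro i hi j hj hij
      rw [mem_insert] at hi hj
      by_cases hix : i = x
      · subst hix
        have hjx : j ≠ i := fun h => hij h.symm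
        rw [Function.update_self, Function.update_of_ne hjx]
        exact h2.2 j (hj.resolve_left hjx)
      · rw [Function.update_of_ne hix]
        by_cases hjx : j = x
        · subst hjx
          rw [Function.update_self]
          exact (h2.2 i (hi.resolve_left hix)).symm
        · rw [Function.update_of_ne hjx]
          exact hT2 i (hi.resolve_left hix) j (hj.resolve_left hjx) hij

/-- no colour-changing gadget inside `U` -/
def NoGadget {V : Type*} [DecidableEq V] {r : ℕ} (k : ℕ) (H : Finset (Finset V)) (U : Finset V)
    (c : Finset V → Fin r) : Prop :=
  ∀ M1 M2 : Finset (Finset V), M1 ⊆ H → M2 ⊆ H →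
    (∀ e ∈ M1, ∀ f ∈ M1, e ≠ f → Disjoint e f) → (∀ e ∈ M2, ∀ f ∈ M2, e ≠ f → Disjoint e f) →
    M1.biUnion id = M2.biUnion id → M1.biUnion id ⊆ U → M1.card ≤ k + 1 →
    ∀ i, (M1.filter (fun e => c e = i)).card = (M2.filter (fun e => c e = i)).card

lemma noGadget_family {V ι : Type*} [DecidableEq V] [Fintype ι] {r k : ℕ} (hk : 1 ≤ k)
    {H : Finset (Finset V)} (hH : HyperUniform k H) {U : Finset V} {c : Finset V → Fin r}
    (hN : NoGadget k H U c) (hι : Fintype.card ι ≤ k + 1) (A B : ι → Finset V)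
    (hA : ∀ i, A i ∈ H) (hB : ∀ i, B i ∈ H)
    (hAd : ∀ i j, i ≠ j → Disjoint (A i) (A j)) (hBd : ∀ i j, i ≠ j → Disjoint (B i) (B j))
    (hAB : univ.biUnion A = univ.biUnion B) (hAU : ∀ i, A i ⊆ U) :
    ∑ i, EI (c (A i)) = ∑ i, EI (c (B i)) := by
  classical
  have inj : ∀ A : ι → Finset V, (∀ i, A i ∈ H) → (∀ i j, i ≠ j → Disjoint (A i) (A j)) →
      Function.Injective A := by
    intro A hA hd i j hij
    by_contra hne
    have := hd i j hne
    rw [hij, disjoint_self_iff_empty] at this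
    have h2 := hH _ (hA j)
    rw [this] at h2
    simp at h2; omega
  have iA := inj A hA hAd
  have iB := inj B hB hBd
  have key := hN (univ.image A) (univ.image B) (by intro x; simp; rintro i rfl; exact hA i)
    (by intro x; simp; rintro i rfl; exact hB i)
    (by
      intro e he f hf hef
      simp only [mem_image, mem_univ, true_and] at he hf
      obtain ⟨i, rfl⟩ := he
      obtain ⟨j, rfl⟩ := hf
      exact hAd i j (fun h => hef (by rw [h])))
    (by
      intro e he f hf hef
      simp only [mem_image, mem_univ, true_and] at he hf
      obtain ⟨i, rfl⟩ := he
      obtain ⟨j, rfl⟩ := hf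
      exact hBd i j (fun h => hef (by rw [h])))
    (by rw [image_biUnion, image_biUnion]; simpa using hAB)
    (by rw [image_biUnion, biUnion_subset]; intro i _; exact hAU i)
    (card_image_le.trans (by simpa using hι))
  funext l
  have h1 := key l
  rw [card_filter, card_filter, sum_image (fun _ _ _ _ h => iA h), sum_image (fun _ _ _ _ h => iB h)]
    at h1
  rw [Finset.sum_apply, Finset.sum_apply]
  unfold EI
  exact_mod_cast h1

lemma classify {V : Type*} {r : ℕ} (U : Finset V) (w : V → Fin r → ℤ)
    (hw : ∀ u ∈ U, ∀ v ∈ U, ∃ i j, w u - w v = EI i - EI j) (hr : 0 < r) :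
    ∃ (p : V → Fin r) (b : Fin r → ℤ), (∀ u ∈ U, w u = b + EI (p u)) ∨
      (∀ u ∈ U, w u = b - EI (p u)) := by
  classical
  have : Nonempty (Fin r) := ⟨⟨0, hr⟩⟩
  by_cases hconst : ∀ u ∈ U, ∀ v ∈ U, w u = w v
  · rcases U.eq_empty_or_nonempty with rfl | ⟨o, ho⟩
    · exact ⟨fun _ => ⟨0, hr⟩, 0, by simp⟩
    · refine ⟨fun _ => ⟨0, hr⟩, w o - EI ⟨0, hr⟩, Or.inl fun u hu => ?_⟩
      rw [hconst u hu o ho]; simp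
  push Not at hconst
  obtain ⟨u0, hu0, v0, hv0, hne⟩ := hconst
  obtain ⟨i, j, hij⟩ := hw u0 hu0 v0 hv0
  have hijne : i ≠ j := by
    rintro rfl
    apply hne
    rw [sub_self] at hij
    exact sub_eq_zero.1 hij
  have hx : ∀ x ∈ U, (∃ a, w x = (w v0 - EI j) + EI a) ∨ (∃ b, w x = (w v0 + EI i) - EI b) := by
    intro x hx
    obtain ⟨a, b, hab⟩ := hw x hx v0 hv0
    obtain ⟨c, d, hcd⟩ := hw x hx u0 hu0
    have h0 : ∀ l, EI a l + EI j l + EI d l = EI c l + EI b l + EI i l := by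
      intro l
      have e1 := congrFun hij l
      have e2 := congrFun hab l
      have e3 := congrFun hcd l
      simp only [Pi.sub_apply] at e1 e2 e3
      linarith
    by_cases hbj : b = j
    · left; refine ⟨a, ?_⟩
      rw [← hbj]
      funext l
      have e2 := congrFun hab l
      simp only [Pi.sub_apply, Pi.add_apply] at e2 ⊢
      linarith
    · have hcj : c = j := by
        have := h0 j
        simp only [EI, if_neg hbj, if_neg hijne, if_true] at this
        by_contra hc
        rw [if_neg hc] at this
        split_ifs at this <;> omega
      have hba : b = a ∨ i = a := by
        have := h0 a
        rw [hcj] at this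
        simp only [EI, if_true] at this
        by_contra hcon
        push Not at hcon
        rw [if_neg hcon.1, if_neg hcon.2] at this
        split_ifs at this <;> omega
      rcases hba with rfl | rfl
      · left; refine ⟨j, ?_⟩
        rw [sub_self] at hab
        rw [sub_add_cancel]; exact sub_eq_zero.1 hab
      · right; refine ⟨b, ?_⟩
        funext l
        have e2 := congrFun hab l
        simp only [Pi.sub_apply, Pi.add_apply] at e2 ⊢
        linarith
  by_cases hpl : ∀ x ∈ U, ∃ a, w x = (w v0 - EI j) + EI a
  · choose! p hp using hpl
    exact ⟨p, _, Or.inl hp⟩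
  by_cases hmi : ∀ x ∈ U, ∃ b, w x = (w v0 + EI i) - EI b
  · choose! p hp using hmi
    exact ⟨p, _, Or.inr hp⟩
  exfalso
  push Not at hpl hmi
  obtain ⟨x, hxU, hx1⟩ := hpl
  obtain ⟨y, hyU, hy1⟩ := hmi
  obtain ⟨b, hb⟩ := (hx x hxU).resolve_left (by push Not; exact hx1)
  obtain ⟨a, ha⟩ := (hx y hyU).resolve_right (by push Not; exact hy1)
  have hbi : b ≠ i := by
    rintro rfl; apply hx1 j; rw [hb]; funext l; simp
  have hbj : b ≠ j := by
    rintro rfl; apply hx1 i; rw [hb]; funext l; simp; ring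
  have hai : a ≠ i := by
    rintro rfl; apply hy1 j; rw [ha]; funext l; simp; ring
  have haj : a ≠ j := by
    rintro rfl; apply hy1 i; rw [ha]; funext l; simp
  obtain ⟨c, d, hcd⟩ := hw y hyU x hxU
  rw [ha, hb] at hcd
  have h0 : ∀ l, EI a l + EI b l + EI d l = EI c l + EI i l + EI j l := by
    intro l
    have e3 := congrFun hcd l
    simp only [Pi.sub_apply, Pi.add_apply] at e3
    linarith
  have h1 := h0 i
  have h2 := h0 j
  simp only [EI, if_neg hai, if_neg hbi, if_neg haj, if_neg hbj, if_true, if_neg hijne,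
    if_neg hijne.symm] at h1 h2
  have hdi : d = i := by
    by_contra h; rw [if_neg h] at h1; split_ifs at h1; all_goals omega
  have hdj : d = j := by
    by_contra h; rw [if_neg h] at h2; split_ifs at h2; all_goals omega
  exact hijne (hdi.symm.trans hdj)


/-- common link set inside `U` -/
def CL {V : Type*} [DecidableEq V] (H : Finset (Finset V)) (U : Finset V) (u v : V)
    (T : Finset V) : Prop :=
  T ⊆ U ∧ u ∉ T ∧ v ∉ T ∧ insert u T ∈ H ∧ insert v T ∈ H

lemma CL.symm {V : Type*} [DecidableEq V] {H : Finset (Finset V)} {U : Finset V} {u v : V}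
    {T : Finset V} (h : CL H U u v T) : CL H U v u T :=
  ⟨h.1, h.2.2.1, h.2.1, h.2.2.2.2, h.2.2.2.1⟩

lemma CL.card {V : Type*} [DecidableEq V] {k : ℕ} {H : Finset (Finset V)}
    (hH : HyperUniform k H) {U : Finset V} {u v : V}
    {T : Finset V} (h : CL H U u v T) : T.card ≤ k := by
  have := hH _ h.2.2.2.1
  rw [card_insert_of_notMem h.2.1] at this
  omega

section struct
variable {V : Type*} [DecidableEq V] {r k : ℕ} {H : Finset (Finset V)} {U : Finset V}
  {c : Finset V → Fin r}

lemma swap2 (hk : 1 ≤ k) (hH : HyperUniform k H) (hN : NoGadget k H U c) {u v : V}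
    (hu : u ∈ U) (hv : v ∈ U) (huv : u ≠ v) {T1 T2 : Finset V} (h1 : CL H U u v T1)
    (h2 : CL H U u v T2) (hd : Disjoint T1 T2) :
    EI (c (insert u T1)) - EI (c (insert v T1)) = EI (c (insert u T2)) - EI (c (insert v T2)) := by
  obtain ⟨a1, a2, a3, a4, a5⟩ := h1
  obtain ⟨b1, b2, b3, b4, b5⟩ := h2
  have := noGadget_family hk hH hN (ι := Fin 2) (by simp; omega)
    ![insert u T1, insert v T2] ![insert v T1, insert u T2]
    (by intro i; fin_cases i <;> simp [*]) (by intro i; fin_cases i <;> simp [*])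
    (by
      have : Disjoint (insert u T1) (insert v T2) := by
        simp [disjoint_insert_left, disjoint_insert_right, *, huv.symm]
      intro i j hij
      fin_cases i <;> fin_cases j <;> simp_all [disjoint_comm])
    (by
      have : Disjoint (insert v T1) (insert u T2) := by
        simp [disjoint_insert_left, disjoint_insert_right, *, huv.symm]
      intro i j hij
      fin_cases i <;> fin_cases j <;> simp_all [disjoint_comm])
    (by ext x; simp [Fin.exists_fin_two]; tauto)
    (by intro i; fin_cases i <;> simp [insert_subset_iff, *])
  simp only [Fin.sum_univ_two, Matrix.cons_val_zero, Matrix.cons_val_one] at this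
  rw [sub_eq_sub_iff_add_eq_add, this]; abel

lemma swap3 (hk : 2 ≤ k) (hH : HyperUniform k H) (hN : NoGadget k H U c) {u v o : V}
    (hu : u ∈ U) (hv : v ∈ U) (ho : o ∈ U) (huv : u ≠ v) (hvo : v ≠ o) (huo : u ≠ o)
    {T1 T2 T3 : Finset V} (h1 : CL H U u v T1)
    (h2 : CL H U v o T2) (h3 : CL H U o u T3) (h12 : Disjoint T1 T2) (h13 : Disjoint T1 T3)
    (h23 : Disjoint T2 T3) (o1 : o ∉ T1) (u2 : u ∉ T2) (v3 : v ∉ T3) :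
    (EI (c (insert u T1)) - EI (c (insert v T1))) + (EI (c (insert v T2)) - EI (c (insert o T2)))
      + (EI (c (insert o T3)) - EI (c (insert u T3))) = 0 := by
  obtain ⟨a1, a2, a3, a4, a5⟩ := h1
  obtain ⟨b1, b2, b3, b4, b5⟩ := h2
  obtain ⟨c1, c2, c3, c4, c5⟩ := h3
  have := noGadget_family (by omega) hH hN (ι := Fin 3) (by simp; omega)
    ![insert u T1, insert v T2, insert o T3] ![insert v T1, insert o T2, insert u T3]
    (by intro i; fin_cases i <;> simp [*]) (by intro i; fin_cases i <;> simp [*])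
    (by
      have e1 : Disjoint (insert u T1) (insert v T2) := by
        simp [disjoint_insert_left, disjoint_insert_right, *, huv.symm, hvo.symm, huo.symm]
      have e2 : Disjoint (insert u T1) (insert o T3) := by
        simp [disjoint_insert_left, disjoint_insert_right, *, huv.symm, hvo.symm, huo.symm]
      have e3 : Disjoint (insert v T2) (insert o T3) := by
        simp [disjoint_insert_left, disjoint_insert_right, *, huv.symm, hvo.symm, huo.symm]
      intro i j hij
      fin_cases i <;> fin_cases j <;> first | exact absurd rfl hij | assumption | (apply Disjoint.symm; assumption))
    (by
      have e1 : Disjoint (insert v T1) (insert o T2) := by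
        simp [disjoint_insert_left, disjoint_insert_right, *, huv.symm, hvo.symm, huo.symm]
      have e2 : Disjoint (insert v T1) (insert u T3) := by
        simp [disjoint_insert_left, disjoint_insert_right, *, huv.symm, hvo.symm, huo.symm]
      have e3 : Disjoint (insert o T2) (insert u T3) := by
        simp [disjoint_insert_left, disjoint_insert_right, *, huv.symm, hvo.symm, huo.symm]
      intro i j hij
      fin_cases i <;> fin_cases j <;> first | exact absurd rfl hij | assumption | (apply Disjoint.symm; assumption))
    (by ext x; simp [Fin.exists_fin_succ]; tauto)
    (by intro i; fin_cases i <;> simp [insert_subset_iff, *])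
  simp only [Fin.sum_univ_three, Matrix.cons_val_zero, Matrix.cons_val_one, Matrix.cons_val_two,
    Matrix.cons_val] at this
  rw [← sub_eq_zero] at this
  rw [← this]; abel

lemma exists_weight (hk : 2 ≤ k) (hH : HyperUniform k H) (hN : NoGadget k H U c)
    (hP : ∀ u ∈ U, ∀ v ∈ U, u ≠ v → ∀ X : Finset V, X.card ≤ 4 * k * k →
      ∃ T, CL H U u v T ∧ Disjoint T X) :
    ∃ w : V → Fin r → ℤ, ∀ u ∈ U, ∀ v ∈ U, ∀ T, CL H U u v T →
      EI (c (insert u T)) - EI (c (insert v T)) = w u - w v := by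
  have hD : ∀ u v : V, ∃ d : Fin r → ℤ, (u = v → d = 0) ∧ (u ∈ U → v ∈ U → ∀ T, CL H U u v T →
      EI (c (insert u T)) - EI (c (insert v T)) = d) := by
    intro u v
    by_cases huv : u = v
    · subst huv
      exact ⟨0, fun _ => rfl, fun _ _ T _ => sub_self _⟩
    by_cases hU : u ∈ U ∧ v ∈ U
    · obtain ⟨hu, hv⟩ := hU
      obtain ⟨T0, hT0, -⟩ := hP u hu v hv huv ∅ (by simp)
      refine ⟨EI (c (insert u T0)) - EI (c (insert v T0)), fun h => absurd h huv,
        fun _ _ T hT => ?_⟩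
      obtain ⟨T3, hT3, hd⟩ := hP u hu v hv huv (T ∪ T0) (by
        have := card_union_le T T0
        have := hT.card hH
        have := hT0.card hH
        nlinarith)
      rw [disjoint_union_right] at hd
      rw [swap2 (by omega) hH hN hu hv huv hT hT3 hd.1.symm,
        swap2 (by omega) hH hN hu hv huv hT0 hT3 hd.2.symm]
    · exact ⟨0, fun _ => rfl, fun h1 h2 => absurd ⟨h1, h2⟩ hU⟩
  choose D hD0 hD1 using hD
  rcases U.eq_empty_or_nonempty with hU | ⟨o, ho⟩
  · exact ⟨fun _ => 0, fun u hu => by simp [hU] at hu⟩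
  refine ⟨fun u => D u o, fun u hu v hv T hT => ?_⟩
  by_cases huv : u = v
  · subst huv; simp
  by_cases huo : u = o
  · subst huo
    beta_reduce
    rw [hD0 u u rfl, ← hD1 v u hv ho T hT.symm]; abel
  by_cases hvo : v = o
  · subst hvo
    beta_reduce
    rw [hD0 v v rfl, ← hD1 u v hu ho T hT]; abel
  obtain ⟨T1, hT1, d1⟩ := hP u hu v hv huv {o} (by simp; nlinarith)
  obtain ⟨T2, hT2, d2⟩ := hP v hv o ho hvo (insert u T1) (by
    have := card_insert_le u T1
    have := hT1.card hH
    nlinarith)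
  obtain ⟨T3, hT3, d3⟩ := hP o ho u hu (Ne.symm huo) (insert v (T1 ∪ T2)) (by
    have := card_insert_le v (T1 ∪ T2)
    have := card_union_le T1 T2
    have := hT1.card hH
    have := hT2.card hH
    nlinarith)
  rw [disjoint_singleton_right] at d1
  rw [disjoint_insert_right] at d2 d3
  rw [disjoint_union_right] at d3
  have key := swap3 hk hH hN hu hv ho huv hvo huo hT1 hT2 hT3 d2.2.symm d3.2.1.symm d3.2.2.symm
    d1 d2.1 d3.1
  rw [hD1 u v hu hv T1 hT1, hD1 v o hv ho T2 hT2, ← neg_sub, hD1 u o hu ho T3 hT3.symm] at key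
  rw [hD1 u v hu hv T hT]
  rw [← sub_eq_zero, ← key]; abel

lemma edge_weight_disj (hk : 2 ≤ k) (hH : HyperUniform k H) (hN : NoGadget k H U c)
    (hP : ∀ u ∈ U, ∀ v ∈ U, u ≠ v → ∀ X : Finset V, X.card ≤ 4 * k * k →
      ∃ T, CL H U u v T ∧ Disjoint T X)
    (w : V → Fin r → ℤ) (hw : ∀ u ∈ U, ∀ v ∈ U, ∀ T, CL H U u v T →
      EI (c (insert u T)) - EI (c (insert v T)) = w u - w v)
    {e f : Finset V} (he : e ∈ H) (hf : f ∈ H) (heU : e ⊆ U) (hfU : f ⊆ U) (hef : Disjoint e f) :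
    EI (c e) - ∑ u ∈ e, w u = EI (c f) - ∑ u ∈ f, w u := by
  have hce := hH e he
  have hcf := hH f hf
  obtain ⟨φ⟩ : Nonempty (e ≃ f) := ⟨Finset.equivOfCardEq (hce.trans hcf.symm)⟩
  have hne : ∀ (x : e) (y : f), (x : V) ≠ y := fun x y h =>
    (disjoint_left.1 hef x.2) (h ▸ y.2)
  obtain ⟨T, hT1, hT2⟩ := greedy_sets (fun (x : e) T => CL H U x (φ x) T) k (4 * k * k) (e ∪ f)
    univ (by
      intro x _ X hX
      obtain ⟨T, h1, h2⟩ := hP x (heU x.2) (φ x) (hfU (φ x).2) (hne _ _) X hX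
      exact ⟨T, h1, h2, h1.card hH⟩) (by
      have := card_union_le e f
      simp only [card_univ, Fintype.card_coe]
      nlinarith)
  have hT3 : ∀ x : e, CL H U x (φ x) (T x) := fun x => (hT1 x (mem_univ _)).1
  have hT4 : ∀ x, Disjoint (T x) e ∧ Disjoint (T x) f := fun x =>
    disjoint_union_right.1 (hT1 x (mem_univ _)).2.1
  have hT5 : ∀ x y, x ≠ y → Disjoint (T x) (T y) := fun x y h =>
    hT2 x (mem_univ _) y (mem_univ _) h
  have ne1 : ∀ (x y : e), (x : V) ∉ T y := fun x y h => disjoint_left.1 (hT4 y).1 h x.2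
  have ne2 : ∀ (x : f) (y : e), (x : V) ∉ T y := fun x y h => disjoint_left.1 (hT4 y).2 h x.2
  have key := noGadget_family (by omega) hH hN (ι := Option e)
    (by simp [hce])
    (fun o => o.elim e (fun x => insert (φ x : V) (T x)))
    (fun o => o.elim f (fun x => insert (x : V) (T x)))
    (by intro i; cases i with
        | none => exact he
        | some x => exact (hT3 x).2.2.2.2)
    (by intro i; cases i with
        | none => exact hf
        | some x => exact (hT3 x).2.2.2.1)
    (by
      have h1 : ∀ x : e, Disjoint e (insert (φ x : V) (T x)) := by
        intro x
        rw [disjoint_insert_right]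
        exact ⟨fun h => hne ⟨_, h⟩ (φ x) rfl, (hT4 x).1.symm⟩
      intro i j hij
      cases i with
      | none => cases j with
        | none => exact absurd rfl hij
        | some y => exact h1 y
      | some x => cases j with
        | none => exact (h1 x).symm
        | some y =>
          have hxy : x ≠ y := fun h => hij (by rw [h])
          simp only [Option.elim]
          rw [disjoint_insert_left, disjoint_insert_right, mem_insert]
          refine ⟨?_, ne2 _ _, hT5 x y hxy⟩
          rintro (h | h)
          · exact hxy (φ.injective (Subtype.ext h))
          · exact ne2 _ _ h)
    (by
      have h1 : ∀ x : e, Disjoint f (insert (x : V) (T x)) := by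
        intro x
        rw [disjoint_insert_right]
        exact ⟨fun h => hne x ⟨_, h⟩ rfl, (hT4 x).2.symm⟩
      intro i j hij
      cases i with
      | none => cases j with
        | none => exact absurd rfl hij
        | some y => exact h1 y
      | some x => cases j with
        | none => exact (h1 x).symm
        | some y =>
          have hxy : x ≠ y := fun h => hij (by rw [h])
          simp only [Option.elim]
          rw [disjoint_insert_left, disjoint_insert_right, mem_insert]
          refine ⟨?_, ne1 _ _, hT5 x y hxy⟩
          rintro (h | h)
          · exact hxy (Subtype.ext h)
          · exact ne1 _ _ h)
    (by
      ext z
      simp only [mem_biUnion, mem_univ, true_and]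
      constructor
      · rintro ⟨o, ho⟩
        cases o with
        | none => exact ⟨some ⟨z, ho⟩, mem_insert_self _ _⟩
        | some x =>
          rcases mem_insert.1 ho with h | h
          · exact ⟨none, by rw [h]; exact (φ x).2⟩
          · exact ⟨some x, mem_insert_of_mem h⟩
      · rintro ⟨o, ho⟩
        cases o with
        | none =>
          exact ⟨some (φ.symm ⟨z, ho⟩), by simp⟩
        | some x =>
          rcases mem_insert.1 ho with h | h
          · exact ⟨none, by rw [h]; exact x.2⟩
          · exact ⟨some x, mem_insert_of_mem h⟩)
    (by intro i; cases i with
        | none => exact heU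
        | some x => exact insert_subset (hfU (φ x).2) (hT3 x).1)
  rw [Fintype.sum_option, Fintype.sum_option] at key
  simp only [Option.elim] at key
  have h1 : ∑ x : e, (EI (c (insert (x : V) (T x))) - EI (c (insert (φ x : V) (T x)))) =
      ∑ u ∈ e, w u - ∑ u ∈ f, w u := by
    rw [sum_congr rfl (fun (x : e) _ => hw x (heU x.2) (φ x) (hfU (φ x).2) (T x) (hT3 x)),
      sum_sub_distrib, ← sum_coe_sort e, ← sum_coe_sort f]
    congr 1
    exact Equiv.sum_comp φ (fun y : f => w y)
  rw [sum_sub_distrib] at h1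
  rw [sub_eq_sub_iff_sub_eq_sub, ← h1, sub_eq_sub_iff_add_eq_add, key]; abel

lemma structural (hk : 2 ≤ k) (hr : 0 < r) (hH : HyperUniform k H) (hN : NoGadget k H U c)
    (hP : ∀ u ∈ U, ∀ v ∈ U, u ≠ v → ∀ X : Finset V, X.card ≤ 4 * k * k →
      ∃ T, CL H U u v T ∧ Disjoint T X) (hU : 2 * k + 2 ≤ U.card) :
    ∃ (p : V → Fin r) (a : Fin r → ℤ),
      (∀ e ∈ H, e ⊆ U → ∀ l, (typ p e l : ℤ) = a l + (if c e = l then 1 else 0)) ∨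
      (∀ e ∈ H, e ⊆ U → ∀ l, (typ p e l : ℤ) = a l - (if c e = l then 1 else 0)) := by
  obtain ⟨w, hw⟩ := exists_weight hk hH hN hP
  have hdis := fun {e f : Finset V} (he : e ∈ H) (hf : f ∈ H) =>
    edge_weight_disj hk hH hN hP w hw he hf
  have hall : ∀ e ∈ H, ∀ f ∈ H, e ⊆ U → f ⊆ U →
      EI (c e) - ∑ u ∈ e, w u = EI (c f) - ∑ u ∈ f, w u := by
    intro e he f hf heU hfU
    have hcard : 1 < (U \ (e ∪ f)).card := by
      have := le_card_sdiff (e ∪ f) U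
      have := card_union_le e f
      have := hH e he
      have := hH f hf
      omega
    obtain ⟨u, hu, v, hv, huv⟩ := one_lt_card.1 hcard
    rw [mem_sdiff] at hu hv
    obtain ⟨T, hT, hd⟩ := hP u hu.1 v hv.1 huv (e ∪ f) (by
      have := card_union_le e f
      have := hH e he
      have := hH f hf
      nlinarith)
    have hg : Disjoint (insert u T) (e ∪ f) := by
      rw [disjoint_insert_left]; exact ⟨hu.2, hd⟩
    rw [disjoint_union_right] at hg
    have hgU : insert u T ⊆ U := insert_subset hu.1 hT.1
    rw [← hdis hT.2.2.2.1 he hgU heU hg.1, ← hdis hT.2.2.2.1 hf hgU hfU hg.2]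
  obtain ⟨q, hq⟩ : ∃ q : Fin r → ℤ, ∀ e ∈ H, e ⊆ U → EI (c e) = q + ∑ u ∈ e, w u := by
    by_cases hex : ∃ e ∈ H, e ⊆ U
    · obtain ⟨e, he, heU⟩ := hex
      refine ⟨EI (c e) - ∑ u ∈ e, w u, fun f hf hfU => ?_⟩
      rw [hall e he f hf heU hfU]; abel
    · exact ⟨0, fun e he heU => absurd ⟨e, he, heU⟩ hex⟩
  obtain ⟨p, b, hb⟩ := classify U w (by
    intro u hu v hv
    by_cases huv : u = v
    · subst huv; exact ⟨⟨0, hr⟩, ⟨0, hr⟩, by simp⟩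
    · obtain ⟨T, hT, -⟩ := hP u hu v hv huv ∅ (by simp)
      exact ⟨_, _, (hw u hu v hv T hT).symm⟩) hr
  have htyp : ∀ (e : Finset V) l, ∑ u ∈ e, EI (p u) l = (typ p e l : ℤ) := by
    intro e l
    unfold typ EI
    rw [card_filter]; push_cast; rfl
  refine ⟨p, ?_⟩
  rcases hb with hb | hb
  · refine ⟨fun l => -(q l + k * b l), Or.inl fun e he heU l => ?_⟩
    have h1 := congrFun (hq e he heU) l
    rw [sum_congr rfl (fun u hu => hb u (heU hu)), sum_add_distrib, sum_const, hH e he] at h1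
    simp only [Pi.add_apply, nsmul_eq_mul, Finset.sum_apply, htyp] at h1
    rw [show EI (c e) l = if c e = l then 1 else 0 from rfl, Pi.mul_apply, Pi.natCast_apply] at h1
    beta_reduce
    linarith
  · refine ⟨fun l => (q l + k * b l), Or.inr fun e he heU l => ?_⟩
    have h1 := congrFun (hq e he heU) l
    rw [sum_congr rfl (fun u hu => hb u (heU hu)), sum_sub_distrib, sum_const, hH e he] at h1
    simp only [Pi.add_apply, Pi.sub_apply, nsmul_eq_mul, Finset.sum_apply, htyp] at h1
    rw [show EI (c e) l = if c e = l then 1 else 0 from rfl, Pi.mul_apply, Pi.natCast_apply] at h1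
    beta_reduce
    linarith
end struct


lemma card_unif_le {n m : ℕ} (S : Finset (Finset (Fin n))) (hS : ∀ T ∈ S, T.card = m) :
    (S.card : ℝ) ≤ Ef m n := by
  have h1 : S ⊆ univ.powersetCard m := fun T hT => by
    rw [mem_powersetCard]; exact ⟨subset_univ _, hS T hT⟩
  have h2 := card_le_card h1
  rw [card_powersetCard, card_univ, Fintype.card_fin] at h2
  calc (S.card : ℝ) ≤ (n.choose m : ℝ) := by exact_mod_cast h2
    _ ≤ _ := Nat.choose_le_pow_div m n

lemma good_count {k n : ℕ} (hk : 2 ≤ k) (hn : 2 * k ≤ n) {H : Finset (Finset (Fin n))}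
    (hH : HyperUniform k H) {h : ℝ} {v : Fin n}
    (hd : h * ((n - 1).choose (k - 1) : ℝ) ≤ (hdeg H v : ℝ)) (Y : Finset (Fin n)) (θ : ℝ)
    (hY : (Y.card : ℝ) ≤ θ * n) :
    (h - 2 * k * θ) * ((n - 1).choose (k - 1) : ℝ) ≤
      (((lnk H v).filter (fun T => Disjoint T Y)).card : ℝ) := by
  have h1 := lnk_good hk hH v Y
  rw [Fintype.card_fin] at h1
  have h1' : (hdeg H v : ℝ) ≤ (((lnk H v).filter (fun T => Disjoint T Y)).card : ℝ) +
      Y.card * ((n - 1).choose (k - 2) : ℝ) := by exact_mod_cast h1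
  have h2 := choose_pred_bound hk hn
  have h0 : (0 : ℝ) < n := by exact_mod_cast (by omega : 0 < n)
  have h3 : (Y.card : ℝ) * ((n - 1).choose (k - 2) : ℝ) ≤
      θ * (2 * k * ((n - 1).choose (k - 1) : ℝ)) := by
    have hθ : 0 ≤ θ := by
      have : (0 : ℝ) ≤ Y.card := by positivity
      by_contra hc
      push Not at hc
      nlinarith
    calc (Y.card : ℝ) * ((n - 1).choose (k - 2) : ℝ) ≤ θ * n * ((n - 1).choose (k - 2) : ℝ) := by
          gcongr
      _ = θ * (((n - 1).choose (k - 2) : ℝ) * n) := by ring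
      _ ≤ _ := by gcongr
  linarith

lemma common_link {k n : ℕ} (hk : 3 ≤ k) (hn : 2 * k ≤ n) {H : Finset (Finset (Fin n))}
    (hH : HyperUniform k H) {h ν θ : ℝ}
    (hd : ∀ v, h * ((n - 1).choose (k - 1) : ℝ) ≤ (hdeg H v : ℝ))
    (hN : Ef (k - 1) n ≤ (1 + ν) * ((n - 1).choose (k - 1) : ℝ))
    (hh : (1 + ν) < 2 * (h - 2 * k * θ)) (U : Finset (Fin n))
    (hU : ((Uᶜ).card : ℝ) + 4 * k * k ≤ θ * n) :
    ∀ u ∈ U, ∀ v ∈ U, u ≠ v → ∀ X : Finset (Fin n), X.card ≤ 4 * k * k →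
      ∃ T, CL H U u v T ∧ Disjoint T X := by
  intro u hu v hv huv X hX
  have hY : ((Uᶜ ∪ X).card : ℝ) ≤ θ * n := by
    have h1 : ((Uᶜ ∪ X).card : ℝ) ≤ (Uᶜ).card + X.card := by exact_mod_cast card_union_le _ _
    have h2 : (X.card : ℝ) ≤ 4 * k * k := by exact_mod_cast hX
    linarith
  have g1 := good_count (by omega) hn hH (hd u) _ θ hY
  have g2 := good_count (by omega) hn hH (hd v) _ θ hY
  set A := (lnk H u).filter (fun T => Disjoint T (Uᶜ ∪ X))
  set B := (lnk H v).filter (fun T => Disjoint T (Uᶜ ∪ X))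
  have hD : (0 : ℝ) < ((n - 1).choose (k - 1) : ℝ) := by
    exact_mod_cast Nat.choose_pos (by omega)
  have hAB : (A ∩ B).Nonempty := by
    by_contra hne
    rw [not_nonempty_iff_eq_empty, ← disjoint_iff_inter_eq_empty] at hne
    have h1 := card_unif_le (m := k - 1) (A ∪ B) (by
      intro T hT
      rcases mem_union.1 hT with hT | hT
      · exact lnk_card hH (mem_filter.1 hT).1
      · exact lnk_card hH (mem_filter.1 hT).1)
    rw [card_union_of_disjoint hne] at h1
    push_cast at h1
    nlinarith
  obtain ⟨T, hT⟩ := hAB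
  rw [mem_inter, mem_filter, mem_filter] at hT
  obtain ⟨⟨h1, h2⟩, h3, -⟩ := hT
  rw [mem_lnk] at h1 h3
  rw [disjoint_union_right] at h2
  refine ⟨T, ⟨?_, h1.1, h3.1, h1.2, h3.2⟩, h2.2⟩
  exact disjoint_compl_right_iff.1 h2.1

/-- gadget dichotomy -/
lemma gadget_dichotomy {V : Type*} [DecidableEq V] [Fintype V] {k r : ℕ} (hk : 1 ≤ k)
    (H : Finset (Finset V)) (hH : HyperUniform k H) (c : Finset V → Fin r) (S : ℕ) :
    (∃ i, ∃ A B : Finset (Finset V), A ⊆ H ∧ B ⊆ H ∧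
      (∀ e ∈ A, ∀ f ∈ A, e ≠ f → Disjoint e f) ∧ (∀ e ∈ B, ∀ f ∈ B, e ≠ f → Disjoint e f) ∧
      A.biUnion id = B.biUnion id ∧ A.card ≤ (k + 1) * S ∧
      (B.filter (fun e => c e = i)).card + S ≤ (A.filter (fun e => c e = i)).card) ∨
    (∃ U : Finset V, (Uᶜ).card ≤ r * ((k + 1) * S * k) ∧ NoGadget k H U c) := by
  set Q : Fin r → ℕ → Prop := fun i s => ∃ A B : Finset (Finset V), A ⊆ H ∧ B ⊆ H ∧
      (∀ e ∈ A, ∀ f ∈ A, e ≠ f → Disjoint e f) ∧ (∀ e ∈ B, ∀ f ∈ B, e ≠ f → Disjoint e f) ∧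
      A.biUnion id = B.biUnion id ∧ A.card ≤ (k + 1) * s ∧
      (B.filter (fun e => c e = i)).card + s ≤ (A.filter (fun e => c e = i)).card with hQ
  by_cases hS : ∃ i, Q i S
  · exact Or.inl hS
  right
  push Not at hS
  have h0 : ∀ i, Q i 0 := fun i => ⟨∅, ∅, by simp⟩
  have hmax : ∀ i, ∃ s, s < S ∧ Q i s ∧ ¬ Q i (s + 1) := by
    intro i
    by_contra hcon
    push Not at hcon
    have : ∀ s, s ≤ S → Q i s := by
      intro s
      induction s with
      | zero => exact fun _ => h0 i
      | succ s ih => exact fun hs => hcon s (by omega) (ih (by omega))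
    exact hS i (this S le_rfl)
  choose s hs1 hs2 hs3 using hmax
  choose A B hA hB hAm hBm hAB hAc hcnt using hs2
  refine ⟨((univ : Finset (Fin r)).biUnion fun i => (A i).biUnion id)ᶜ, ?_, ?_⟩
  · rw [compl_compl]
    refine (card_biUnion_le_card_mul _ _ ((k + 1) * S * k) ?_).trans (by simp)
    intro i _
    rw [card_biUnion_unif (A i) (hAm i) (fun e he => hH e (hA i he))]
    exact Nat.mul_le_mul_right _ ((hAc i).trans (Nat.mul_le_mul_left _ (hs1 i).le))
  · have main : ∀ M1 M2 : Finset (Finset V), M1 ⊆ H → M2 ⊆ H →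
      (∀ e ∈ M1, ∀ f ∈ M1, e ≠ f → Disjoint e f) → (∀ e ∈ M2, ∀ f ∈ M2, e ≠ f → Disjoint e f) →
      M1.biUnion id = M2.biUnion id →
      M1.biUnion id ⊆ ((univ : Finset (Fin r)).biUnion fun i => (A i).biUnion id)ᶜ →
      M1.card ≤ k + 1 →
      ∀ i, (M1.filter (fun e => c e = i)).card ≤ (M2.filter (fun e => c e = i)).card := by
      intro M1 M2 h1 h2 m1 m2 h12 hU hcard i
      by_contra hlt
      push Not at hlt
      apply hs3 i
      have dj : Disjoint ((A i).biUnion id) (M1.biUnion id) := by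
        have := subset_compl_iff_disjoint_right.1 hU
        exact (this.mono_right (subset_biUnion_of_mem (fun i => (A i).biUnion id) (mem_univ i))).symm
      have gen : ∀ A' M' : Finset (Finset V), A' ⊆ H → Disjoint (A'.biUnion id) (M'.biUnion id) →
          (∀ e ∈ A', ∀ f ∈ M', Disjoint e f) ∧ Disjoint A' M' := by
        intro A' M' hA' hd
        have : ∀ e ∈ A', ∀ f ∈ M', Disjoint e f := fun e he f hf =>
          hd.mono (subset_biUnion_of_mem id he) (subset_biUnion_of_mem id hf)
        refine ⟨this, ?_⟩
        rw [disjoint_left]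
        intro e he he'
        have h3 := this e he e he'
        rw [disjoint_self_iff_empty] at h3
        have := hH e (hA' he)
        rw [h3] at this
        simp at this; omega
      have mat : ∀ A' M' : Finset (Finset V), (∀ e ∈ A', ∀ f ∈ M', Disjoint e f) →
          (∀ e ∈ A', ∀ f ∈ A', e ≠ f → Disjoint e f) → (∀ e ∈ M', ∀ f ∈ M', e ≠ f → Disjoint e f) →
          (∀ e ∈ A' ∪ M', ∀ f ∈ A' ∪ M', e ≠ f → Disjoint e f) := by
        intro A' M' h1 h2 h3 e he f hf hef
        rcases mem_union.1 he with he | he <;> rcases mem_union.1 hf with hf | hf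
        · exact h2 e he f hf hef
        · exact h1 e he f hf
        · exact (h1 f hf e he).symm
        · exact h3 e he f hf hef
      have gA := gen (A i) M1 (hA i) dj
      have gB := gen (B i) M2 (hB i) (by rw [← hAB i, ← h12]; exact dj)
      refine ⟨A i ∪ M1, B i ∪ M2, union_subset (hA i) h1, union_subset (hB i) h2,
        mat _ _ gA.1 (hAm i) m1, mat _ _ gB.1 (hBm i) m2, ?_, ?_, ?_⟩
      · rw [union_biUnion, union_biUnion, hAB i, h12]
      · refine (card_union_le _ _).trans ?_
        have := hAc i
        rw [mul_add]; omega
      · rw [filter_union, filter_union, card_union_of_disjoint (disjoint_filter_filter gA.2),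
          card_union_of_disjoint (disjoint_filter_filter gB.2)]
        have := hcnt i
        omega
    intro M1 M2 h1 h2 m1 m2 h12 hU hcard i
    refine le_antisymm (main M1 M2 h1 h2 m1 m2 h12 hU hcard i)
      (main M2 M1 h2 h1 m2 m1 h12.symm (h12 ▸ hU) ?_ i)
    have e1 := card_biUnion_unif M1 m1 (fun e he => hH e (h1 he))
    have e2 := card_biUnion_unif M2 m2 (fun e he => hH e (h2 he))
    rw [h12, e2] at e1
    have := Nat.eq_of_mul_eq_mul_right (by omega) e1
    omega


lemma sum_cnt {V : Type*} {r : ℕ} (M : Finset (Finset V)) (c : Finset V → Fin r) :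
    ∑ i, ((M.filter (fun e => c e = i)).card : ℝ) = M.card := by
  rw [card_eq_sum_card_fiberwise (s := M) (t := univ) (f := c) (fun x _ => mem_univ _)]
  push_cast; rfl

lemma pm_card {k n : ℕ} {H M : Finset (Finset (Fin n))} (hH : HyperUniform k H) (hM : IsPM H M) :
    (M.card : ℝ) * k = n := by
  have h1 := card_biUnion_unif M hM.2.1 (fun e he => hH e (hM.1 he))
  have : M.biUnion id = univ := by ext x; simpa using hM.2.2 x
  rw [this, card_univ, Fintype.card_fin] at h1
  exact_mod_cast h1.symm

lemma win {k r : ℕ} (hk : 3 ≤ k) (hr : 2 ≤ r) (h ε : ℝ) (hf : fThr k ≤ h) (hε : 0 < ε) :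
    ∃ n₀ : ℕ, ∀ n : ℕ, n₀ ≤ n → k ∣ n → ∀ H : Finset (Finset (Fin n)), HyperUniform k H →
      (∀ v : Fin n, (h + ε) * (((n - 1).choose (k - 1) : ℕ) : ℝ) ≤ (hdeg H v : ℝ)) →
      ∀ (c : Finset (Fin n) → Fin r) (i : Fin r) (A B : Finset (Finset (Fin n))), A ⊆ H → B ⊆ H →
      (∀ e ∈ A, ∀ f ∈ A, e ≠ f → Disjoint e f) → (∀ e ∈ B, ∀ f ∈ B, e ≠ f → Disjoint e f) →
      A.biUnion id = B.biUnion id → ∀ (S : ℕ) (δ θ : ℝ), 4 * k * θ ≤ ε → θ ≤ 1 / 2 →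
      (A.card * k : ℝ) ≤ θ * n → r * (δ * n) ≤ S →
      (B.filter (fun e => c e = i)).card + S ≤ (A.filter (fun e => c e = i)).card →
      ∃ M, IsPM H M ∧ ∃ i : Fin r, (n : ℝ) / ((r : ℝ) * (k : ℝ)) + δ * (n : ℝ) ≤
            ((M.filter (fun e => c e = i)).card : ℝ) := by
  obtain ⟨n₁, hn₁⟩ := exists_pm_on k (ε / 2) (by linarith)
  refine ⟨2 * n₁ + 2 * k, ?_⟩
  intro n hn hkn H hH hd c i A B hA hB hAm hBm hAB S δ θ hθ1 hθ2 hAθ hS hcnt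
  set W := A.biUnion id with hW
  have hWc : W.card = A.card * k := card_biUnion_unif A hAm (fun e he => hH e (hA he))
  have hn0 : (0 : ℝ) < n := by exact_mod_cast (by omega : 0 < n)
  have hr0 : (0 : ℝ) < r := by exact_mod_cast (by omega : 0 < r)
  have hk0 : (0 : ℝ) < k := by exact_mod_cast (by omega : 0 < k)
  have hWθ : (W.card : ℝ) ≤ θ * n := by rw [hWc]; exact_mod_cast hAθ
  have hUc : (Wᶜ).card + W.card = n := by
    have := card_compl_add_card W
    rwa [Fintype.card_fin] at this
  have hWn : 2 * W.card ≤ n := by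
    have : 2 * (W.card : ℝ) ≤ n := by nlinarith
    exact_mod_cast this
  obtain ⟨P, hPH, hPm, hPu⟩ := hn₁ n Wᶜ (by omega) (by
    have h1 : k ∣ W.card := by rw [hWc]; exact dvd_mul_left _ _
    rw [← hUc] at hkn
    exact (Nat.dvd_add_left h1).1 hkn) H hH (by
    intro v _
    rw [compl_compl]
    refine le_trans ?_ (good_count (by omega) (by omega) hH (hd v) W θ hWθ)
    have hch : (((Wᶜ).card - 1).choose (k - 1) : ℝ) ≤ ((n - 1).choose (k - 1) : ℝ) := by
      exact_mod_cast Nat.choose_le_choose _ (by omega)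
    have hf0 : 0 ≤ fThr k := le_trans (by norm_num) (fThr_ge_half k hk)
    calc (fThr k + ε / 2) * (((Wᶜ).card - 1).choose (k - 1) : ℝ)
        ≤ (fThr k + ε / 2) * ((n - 1).choose (k - 1) : ℝ) := by gcongr
      _ ≤ _ := by
        gcongr
        linarith)
  have key : ∀ A' : Finset (Finset (Fin n)), A' ⊆ H → A'.biUnion id = W →
      (∀ e ∈ A', ∀ f ∈ A', e ≠ f → Disjoint e f) → IsPM H (A' ∪ P) ∧ ∀ j,
      ((A' ∪ P).filter (fun e => c e = j)).card = (A'.filter (fun e => c e = j)).card +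
        (P.filter (fun e => c e = j)).card := by
    intro A' hA' hA'W hA'm
    have hd1 : ∀ e ∈ A', ∀ f ∈ P, Disjoint e f := by
      intro e he f hf
      have h1 : e ⊆ W := by rw [← hA'W]; exact subset_biUnion_of_mem id he
      have h2 : f ⊆ Wᶜ := by rw [← hPu]; exact subset_biUnion_of_mem id hf
      exact (disjoint_compl_right (a := W)).mono h1 h2
    have hd2 : Disjoint A' P := by
      rw [disjoint_left]
      intro e he he'
      have h3 := hd1 e he e he'
      rw [disjoint_self_iff_empty] at h3
      have := hH e (hA' he)
      rw [h3] at this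
      simp at this; omega
    refine ⟨⟨union_subset hA' hPH, ?_, ?_⟩, ?_⟩
    · intro e he f hf hef
      rcases mem_union.1 he with he | he <;> rcases mem_union.1 hf with hf | hf
      · exact hA'm e he f hf hef
      · exact hd1 e he f hf
      · exact (hd1 f hf e he).symm
      · exact hPm e he f hf hef
    · intro v
      by_cases hv : v ∈ W
      · rw [← hA'W, mem_biUnion] at hv
        obtain ⟨e, he, hve⟩ := hv
        exact ⟨e, mem_union_left _ he, hve⟩
      · have hv' : v ∈ Wᶜ := mem_compl.2 hv
        rw [← hPu, mem_biUnion] at hv'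
        obtain ⟨e, he, hve⟩ := hv'
        exact ⟨e, mem_union_right _ he, hve⟩
    · intro j
      rw [filter_union, card_union_of_disjoint (disjoint_filter_filter hd2)]
  obtain ⟨pA, cA⟩ := key A hA rfl hAm
  obtain ⟨pB, cB⟩ := key B hB hAB.symm hBm
  by_contra hcon
  push Not at hcon
  have hAl := hcon _ pA i
  have hBl : ∀ j, ((((B ∪ P).filter (fun e => c e = j)).card : ℕ) : ℝ) ≤
      (n / (r * k) + δ * n) - if j = i then (S : ℝ) else 0 := by
    intro j
    split_ifs with hj
    · subst hj
      have : ((B ∪ P).filter (fun e => c e = j)).card + S ≤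
        ((A ∪ P).filter (fun e => c e = j)).card := by rw [cA, cB]; omega
      have : (((B ∪ P).filter (fun e => c e = j)).card : ℝ) + S ≤
        (((A ∪ P).filter (fun e => c e = j)).card : ℝ) := by exact_mod_cast this
      linarith
    · have := hcon _ pB j
      linarith
  obtain ⟨i', hi'⟩ : ∃ i' : Fin r, i' ≠ i := by
    have : Nontrivial (Fin r) := Fin.nontrivial_iff_two_le.2 hr
    exact exists_ne i
  have hstr := hcon _ pB i'
  have hsum := sum_lt_sum (s := univ) (fun j _ => hBl j) ⟨i', mem_univ _, by
    rw [if_neg hi', sub_zero]; exact hstr⟩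
  rw [sum_cnt, sum_sub_distrib, sum_const, sum_ite_eq' , if_pos (mem_univ _), card_univ,
    Fintype.card_fin, nsmul_eq_mul] at hsum
  have hBc := pm_card hH pB
  have : (r : ℝ) * (n / (r * k) + δ * n) = (B ∪ P).card + r * (δ * n) := by
    rw [← hBc]; field_simp
  rw [this] at hsum
  linarith

lemma part_sizes {k r n : ℕ} (hk : 1 ≤ k) (hr : 2 ≤ r) {H M : Finset (Finset (Fin n))}
    (hH : HyperUniform k H) (hM : IsPM H M) (c : Finset (Fin n) → Fin r) (U : Finset (Fin n))
    (p : Fin n → Fin r) (a : Fin r → ℤ) (σ : ℤ) (hσ : σ = 1 ∨ σ = -1)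
    (hty : ∀ e ∈ H, e ⊆ U → ∀ l, (typ p e l : ℤ) = a l + σ * (if c e = l then 1 else 0))
    (δ : ℝ) (hδ : 0 < δ) (hcol : ∀ i, ((M.filter (fun e => c e = i)).card : ℝ) ≤ n / (r * k) + δ * n)
    (hR : (Uᶜ).card < M.card) :
    (∑ l, a l = k - σ) ∧ ∀ l, |(typ p U l : ℝ) - (a l * (n / k) + σ * (n / (r * k)))| ≤
      (2 * k + 2) * (Uᶜ).card + r * (δ * n) := by
  set M' := M.filter (fun e => e ⊆ U) with hM'
  have hn := pm_card hH hM
  have hr0 : (0 : ℝ) < r := by exact_mod_cast (by omega : 0 < r)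
  have hk0 : (0 : ℝ) < k := by exact_mod_cast (by omega : 0 < k)
  set N := M.filter (fun e => ¬ e ⊆ U) with hN
  have hNR : N.card ≤ (Uᶜ).card := by
    have hx : ∀ e ∈ N, ∃ x, x ∈ e ∧ x ∉ U := fun e he => by
      have := (mem_filter.1 he).2
      rw [not_subset] at this
      exact this
    rcases N.eq_empty_or_nonempty with h0 | ⟨e0, he0⟩
    · rw [h0]; simp
    have : Nonempty (Fin n) := ⟨(hx e0 he0).choose⟩
    choose! g hg using hx
    refine card_le_card_of_injOn g (fun e he => by
      simpa using (hg e he).2) ?_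
    intro e he f hf hef
    by_contra hne
    have := hM.2.1 e (mem_filter.1 he).1 f (mem_filter.1 hf).1 hne
    exact disjoint_left.1 this (hg e he).1 (hef ▸ (hg f hf).1)
  have hMN : M'.card + N.card = M.card := card_filter_add_card_filter_not _
  have hM'ne : M'.Nonempty := by
    rw [← card_pos]; omega
  obtain ⟨e0, he0⟩ := hM'ne
  have he0' := mem_filter.1 he0
  have ht0 := hty e0 (hM.1 he0'.1) he0'.2
  have hc0 := hH e0 (hM.1 he0'.1)
  have hsum : ∑ l, a l = k - σ := by
    have h1 : (∑ l, (typ p e0 l : ℤ)) = k := by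
      rw [← hc0, ← sum_typ p e0]; push_cast; rfl
    rw [sum_congr rfl (fun l _ => ht0 l), sum_add_distrib, ← mul_sum] at h1
    simp at h1
    linarith
  refine ⟨hsum, fun l => ?_⟩
  have habs : |(a l : ℝ)| ≤ k + 1 := by
    have h1 := ht0 l
    have h2 : typ p e0 l ≤ k := by
      rw [← hc0]; exact card_le_card (filter_subset _ _)
    have h3 : |a l| ≤ k + 1 := by
      rw [abs_le]
      rcases hσ with rfl | rfl <;> split_ifs at h1 <;> constructor <;> omega
    exact_mod_cast h3
  have hM'm : ∀ e ∈ M', ∀ f ∈ M', e ≠ f → Disjoint e f := fun e he f hf =>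
    hM.2.1 e (mem_filter.1 he).1 f (mem_filter.1 hf).1
  have hNm : ∀ e ∈ N, ∀ f ∈ N, e ≠ f → Disjoint e f := fun e he f hf =>
    hM.2.1 e (mem_filter.1 he).1 f (mem_filter.1 hf).1
  have hlow : M'.biUnion id ⊆ U := biUnion_subset.2 fun e he => (mem_filter.1 he).2
  have hup : U ⊆ M'.biUnion id ∪ N.biUnion id := by
    intro x _
    obtain ⟨e, he, hx⟩ := hM.2.2 x
    by_cases heU : e ⊆ U
    · exact mem_union_left _ (mem_biUnion.2 ⟨e, mem_filter.2 ⟨he, heU⟩, hx⟩)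
    · exact mem_union_right _ (mem_biUnion.2 ⟨e, mem_filter.2 ⟨he, heU⟩, hx⟩)
  have t1 : typ p (M'.biUnion id) l ≤ typ p U l := typ_mono p hlow l
  have t2 : typ p U l ≤ typ p (M'.biUnion id) l + N.card * k := by
    refine (typ_mono p hup l).trans ?_
    unfold typ
    rw [filter_union]
    refine (card_union_le _ _).trans ?_
    gcongr
    rw [← card_biUnion_unif N hNm (fun e he => hH e (hM.1 (mem_filter.1 he).1))]
    exact card_le_card (filter_subset _ _)
  have t3 : (typ p (M'.biUnion id) l : ℝ) =
      a l * M'.card + σ * (M'.filter (fun e => c e = l)).card := by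
    have : (typ p (M'.biUnion id) l : ℤ) =
      a l * M'.card + σ * (M'.filter (fun e => c e = l)).card := by
      rw [typ_biUnion p M' hM'm l]
      push_cast
      rw [sum_congr rfl (fun e he => hty e (hM.1 (mem_filter.1 he).1) (mem_filter.1 he).2 l),
        sum_add_distrib, ← mul_sum, sum_const, card_filter (fun e => c e = l) M']
      push_cast; ring
    exact_mod_cast this
  have t4 : (M'.filter (fun e => c e = l)).card ≤ (M.filter (fun e => c e = l)).card :=
    card_le_card (filter_subset_filter _ (filter_subset _ _))
  have t5 : (M.filter (fun e => c e = l)).card ≤ (M'.filter (fun e => c e = l)).card + N.card := by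
    have : M.filter (fun e => c e = l) ⊆ (M'.filter (fun e => c e = l)) ∪ N := by
      intro e he
      rw [mem_filter] at he
      by_cases heU : e ⊆ U
      · exact mem_union_left _ (mem_filter.2 ⟨mem_filter.2 ⟨he.1, heU⟩, he.2⟩)
      · exact mem_union_right _ (mem_filter.2 ⟨he.1, heU⟩)
    exact (card_le_card this).trans (card_union_le _ _)
  have hnk : (n : ℝ) / k = M.card := by rw [← hn]; field_simp
  have hlowcol : (n : ℝ) / (r * k) - (r - 1) * (δ * n) ≤ ((M.filter (fun e => c e = l)).card : ℝ) := by
    have h1 := sum_cnt M c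
    rw [← add_sum_erase _ _ (mem_univ l)] at h1
    have h2 := sum_le_card_nsmul (univ.erase l) (fun i => ((M.filter (fun e => c e = i)).card : ℝ))
      _ (fun i _ => hcol i)
    rw [card_erase_of_mem (mem_univ _), card_univ, Fintype.card_fin, nsmul_eq_mul,
      Nat.cast_sub (by omega), Nat.cast_one] at h2
    have h3 : (r : ℝ) * (n / (r * k)) = M.card := by rw [← hnk]; field_simp
    nlinarith
  have hup' := hcol l
  rw [hnk]
  set R : ℝ := ((Uᶜ).card : ℝ)
  set m' : ℝ := (M'.card : ℝ)
  set m : ℝ := (M.card : ℝ)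
  set x' : ℝ := ((M'.filter (fun e => c e = l)).card : ℝ)
  set x : ℝ := ((M.filter (fun e => c e = l)).card : ℝ)
  set y : ℝ := (N.card : ℝ)
  have u1 : (typ p (M'.biUnion id) l : ℝ) ≤ typ p U l := by exact_mod_cast t1
  have u2 : (typ p U l : ℝ) ≤ typ p (M'.biUnion id) l + y * k := by
    simp only [y]; exact_mod_cast t2
  have u4 : x' ≤ x := by simp only [x', x]; exact_mod_cast t4
  have u5 : x ≤ x' + y := by simp only [x', x, y]; exact_mod_cast t5
  have u6 : m' + y = m := by simp only [m', m, y]; exact_mod_cast hMN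
  have u7 : y ≤ R := by simp only [y, R]; exact_mod_cast hNR
  have hy0 : 0 ≤ y := by positivity
  have hn0 : (0 : ℝ) ≤ n := by positivity
  have hr2 : (2 : ℝ) ≤ r := by exact_mod_cast hr
  have hdn : 0 ≤ δ * n := by positivity
  have v1 : |(typ p U l : ℝ) - (a l * m' + σ * x')| ≤ R * k := by
    rw [← t3, abs_le]
    constructor <;> nlinarith
  have v2 : |(a l : ℝ) * m' - a l * m| ≤ (k + 1) * R := by
    rw [← mul_sub, abs_mul, show m' - m = -y by linarith, abs_neg, abs_of_nonneg hy0]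
    gcongr
  have v3 : |(σ : ℝ) * x' - σ * (n / (r * k))| ≤ R + r * (δ * n) := by
    have hs : |(σ : ℝ)| = 1 := by rcases hσ with rfl | rfl <;> simp
    rw [← mul_sub, abs_mul, hs, one_mul, abs_le]
    constructor <;> nlinarith
  calc |(typ p U l : ℝ) - (a l * m + σ * (n / (r * k)))|
      = |((typ p U l : ℝ) - (a l * m' + σ * x')) + ((a l : ℝ) * m' - a l * m) +
          ((σ : ℝ) * x' - σ * (n / (r * k)))| := by congr 1; ring
    _ ≤ R * k + (k + 1) * R + (R + r * (δ * n)) :=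
        (abs_add_three _ _ _).trans (by linarith)
    _ = _ := by ring


lemma cont_Fp {k r : ℕ} (hk : 1 ≤ k) (ε : ℝ) (hε : 0 < ε) : ∃ η : ℝ, 0 < η ∧
    ∀ a : Fin r → ℕ, ∑ l, a l = k - 1 → ∀ j, ∀ x : Fin r → ℝ,
      (∀ l, |x l - rho k a l| ≤ η) → Fp k a j x ≤ gF k a j + ε := by
  have h1 : ∀ q : (Fin r → ℕ) × Fin r, ∃ η : ℝ, 0 < η ∧ ∀ x : Fin r → ℝ,
      (∀ l, |x l - rho k q.1 l| ≤ η) → Fp k q.1 q.2 x ≤ gF k q.1 q.2 + ε := by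
    rintro ⟨a, j⟩
    obtain ⟨d, hd, hd2⟩ := Metric.continuous_iff.1 (Fp_continuous k a j) (rho k a) ε hε
    refine ⟨d / 2, by linarith, fun x hx => ?_⟩
    have h2 := hd2 x (by
      refine lt_of_le_of_lt ((dist_pi_le_iff (by linarith : 0 ≤ d / 2)).2 fun l => ?_)
        (by linarith : d / 2 < d)
      rw [Real.dist_eq]; exact hx l)
    rw [Real.dist_eq, Fp_rho hk] at h2
    have := (abs_lt.1 h2).2
    simp only
    linarith
  choose η hη0 hη using h1
  set s : Finset ((Fin r → ℕ) × Fin r) := (Finset.piAntidiag univ (k - 1)) ×ˢ univ with hs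
  rcases s.eq_empty_or_nonempty with he | hne
  · refine ⟨1, one_pos, fun a ha j => ?_⟩
    have : (a, j) ∈ s := by
      rw [hs, mem_product]; exact ⟨by simp [ha], mem_univ _⟩
    rw [he] at this
    simp at this
  · obtain ⟨q, hq, hqm⟩ := exists_min_image s η hne
    refine ⟨η q, hη0 q, fun a ha j x hx => ?_⟩
    have hm : (a, j) ∈ s := by
      rw [hs, mem_product]; exact ⟨by simp [ha], mem_univ _⟩
    exact hη (a, j) x fun l => (hx l).trans (hqm _ hm)

lemma cont_corner (m : ℕ) (t ε : ℝ) (hε : 0 < ε) : ∃ η : ℝ, 0 < η ∧ ∀ x, |x - t| ≤ η →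
    x ^ m ≤ t ^ m + ε := by
  obtain ⟨d, hd, hd2⟩ := Metric.continuous_iff.1 (continuous_pow (M := ℝ) m) t ε hε
  refine ⟨d / 2, by linarith, fun x hx => ?_⟩
  have h2 := hd2 x (by rw [Real.dist_eq]; linarith)
  rw [Real.dist_eq] at h2
  have := (abs_lt.1 h2).2
  linarith

/-- links of `v` inside `U` -/
def gl {n : ℕ} (H : Finset (Finset (Fin n))) (U : Finset (Fin n)) (v : Fin n) :
    Finset (Finset (Fin n)) := (lnk H v).filter (fun T => Disjoint T Uᶜ)

lemma mem_gl {n : ℕ} {H : Finset (Finset (Fin n))} {U : Finset (Fin n)} {v : Fin n}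
    {T : Finset (Fin n)} (h : T ∈ gl H U v) : v ∉ T ∧ insert v T ∈ H ∧ T ⊆ U := by
  unfold gl at h
  rw [mem_filter, mem_lnk] at h
  exact ⟨h.1.1, h.1.2, disjoint_compl_right_iff.1 h.2⟩

lemma gl_card {n k : ℕ} {H : Finset (Finset (Fin n))} (hH : HyperUniform k H) {U : Finset (Fin n)}
    {v : Fin n} {T : Finset (Fin n)} (h : T ∈ gl H U v) : T.card = k - 1 :=
  lnk_card hH (mem_filter.1 h).1

lemma gl_typ {n r : ℕ} {H : Finset (Finset (Fin n))} {c : Finset (Fin n) → Fin r}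
    {U : Finset (Fin n)} {p : Fin n → Fin r} {a : Fin r → ℤ} {σ : ℤ}
    (hty : ∀ e ∈ H, e ⊆ U → ∀ l, (typ p e l : ℤ) = a l + σ * (if c e = l then 1 else 0))
    {v : Fin n} (hv : v ∈ U) {T : Finset (Fin n)} (h : T ∈ gl H U v) :
    ∃ i : Fin r, ∀ l, (typ p T l : ℤ) + (if p v = l then 1 else 0) =
      a l + σ * (if i = l then 1 else 0) := by
  obtain ⟨h1, h2, h3⟩ := mem_gl h
  refine ⟨c (insert v T), fun l => ?_⟩
  rw [← hty _ h2 (insert_subset hv h3) l, typ_insert p h1]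
  push_cast; rfl

lemma exists_of_typ_pos {n r : ℕ} {U : Finset (Fin n)} {p : Fin n → Fin r} {l : Fin r}
    (h : 0 < typ p U l) : ∃ v ∈ U, p v = l := by
  unfold typ at h
  obtain ⟨v, hv⟩ := card_pos.1 h
  exact ⟨v, (mem_filter.1 hv).1, (mem_filter.1 hv).2⟩

lemma plus_contra {k r n : ℕ} (hk : 3 ≤ k) (hr : 2 ≤ r) (hn : 0 < n)
    {H : Finset (Finset (Fin n))} {c : Finset (Fin n) → Fin r}
    {U : Finset (Fin n)} {p : Fin n → Fin r} {a : Fin r → ℤ}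
    (hty : ∀ e ∈ H, e ⊆ U → ∀ l, (typ p e l : ℤ) = a l + 1 * (if c e = l then 1 else 0))
    (hsum : ∑ l, a l = k - 1) (η ε : ℝ)
    (hsz : ∀ l, |(typ p U l : ℝ) - (a l * (n / k) + (n / (r * k)))| ≤ η * n)
    (hη1 : η < 1 / (r * k))
    (hFp : ∀ a : Fin r → ℕ, ∑ l, a l = k - 1 → ∀ j, ∀ x : Fin r → ℝ,
      (∀ l, |x l - rho k a l| ≤ η) → Fp k a j x ≤ gF k a j + ε) :
    ∃ v, ((gl H U v).card : ℝ) ≤ (gThr k r + ε) * Ef (k - 1) n := by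
  have hr0 : (0 : ℝ) < r := by exact_mod_cast (by omega : 0 < r)
  have hr2 : (2 : ℝ) ≤ r := by exact_mod_cast hr
  have hk0 : (0 : ℝ) < k := by exact_mod_cast (by omega : 0 < k)
  have hn0 : (0 : ℝ) < n := by exact_mod_cast hn
  have hηn : η * n < n / (r * k) := by
    have := mul_lt_mul_of_pos_right hη1 hn0
    rwa [div_mul_eq_mul_div, one_mul] at this
  have hrk : (n : ℝ) / k = r * (n / (r * k)) := by field_simp
  have hpos : (0 : ℝ) < n / (r * k) := by positivity
  have ha0 : ∀ l, 0 ≤ a l := by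
    intro l
    by_contra hneg
    have h1 : a l ≤ -1 := by omega
    have h1' : (a l : ℝ) ≤ -1 := by exact_mod_cast h1
    have h2 := (abs_le.1 (hsz l)).2
    have h3 : (0 : ℝ) ≤ typ p U l := by positivity
    rw [hrk] at h2
    have h4 : (a l : ℝ) * (r * (n / (r * k))) ≤ (-1) * (r * (n / (r * k))) := by gcongr
    nlinarith
  obtain ⟨a', ha'⟩ : ∃ a' : Fin r → ℕ, ∀ l, a l = a' l :=
    ⟨fun l => (a l).toNat, fun l => (Int.toNat_of_nonneg (ha0 l)).symm⟩
  have hsum' : ∑ l, a' l = k - 1 := by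
    have : (∑ l, (a' l : ℤ)) = k - 1 := by rw [← hsum]; exact sum_congr rfl fun l _ => (ha' l).symm
    zify [show 1 ≤ k by omega]
    exact this
  have : Nonempty (Fin r) := ⟨⟨0, by omega⟩⟩
  obtain ⟨j, -, hj⟩ := exists_min_image univ a' univ_nonempty
  have htp : 0 < typ p U j := by
    have h2 := (abs_le.1 (hsz j)).1
    have h3 : (0 : ℝ) ≤ a j * (n / k) := by
      have : (0 : ℝ) ≤ a j := by exact_mod_cast ha0 j
      positivity
    have : (0 : ℝ) < typ p U j := by linarith
    exact_mod_cast this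
  obtain ⟨v, hv, hpv⟩ := exists_of_typ_pos htp
  refine ⟨v, ?_⟩
  set x : Fin r → ℝ := fun l => (typ p U l : ℝ) / n with hx
  have hxr : ∀ l, |x l - rho k a' l| ≤ η := by
    intro l
    have h1 := hsz l
    have : (typ p U l : ℝ) - (a l * (n / k) + (n / (r * k))) = (x l - rho k a' l) * n := by
      rw [ha' l]
      simp only [hx, rho]
      push_cast
      field_simp
    rw [this, abs_mul, abs_of_pos hn0] at h1
    exact le_of_mul_le_mul_right h1 hn0
  have hF := hFp a' hsum' j x hxr
  have hG := gF_le_gThr hr (show 1 ≤ k by omega) a' hsum' j (fun l => hj l (mem_univ _))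
  have hsub : gl H U v ⊆ (Ij a' j).biUnion
      (fun i => U.powerset.filter (fun T => ∀ l, typ p T l = sv a' j i l)) := by
    intro T hT
    obtain ⟨i, hi⟩ := gl_typ hty hv hT
    have hmem : i ∈ Ij a' j := by
      unfold Ij
      rw [mem_filter]
      refine ⟨mem_univ _, ?_⟩
      by_contra hcon
      push Not at hcon
      have h1 := hi j
      rw [if_pos hpv, if_neg hcon.1, ha' j] at h1
      omega
    rw [mem_biUnion]
    refine ⟨i, hmem, ?_⟩
    rw [mem_filter, mem_powerset]
    refine ⟨(mem_gl hT).2.2, fun l => ?_⟩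
    have h1 := hi l
    have h2 := sv_spec hmem l
    rw [hpv, ha' l, one_mul] at h1
    generalize sv a' j i l = s at h2 ⊢
    by_cases hlj : j = l <;> by_cases hli : i = l <;>
      simp only [hlj, hli, eq_comm (a := l), if_true, if_false] at h1 h2 <;> omega
  have hc1 := (card_le_card hsub).trans card_biUnion_le
  have hc2 : ((gl H U v).card : ℝ) ≤ ∑ i ∈ Ij a' j, (n : ℝ) ^ (k - 1) * Gm (sv a' j i) x := by
    refine (Nat.cast_le.2 hc1).trans ?_
    push_cast
    refine sum_le_sum fun i hi => ?_
    rw [card_typ, ← hsum', ← sum_sv hi, ← Gm_scale]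
    unfold Gm
    push_cast
    refine prod_le_prod (fun _ _ => by positivity) fun l _ => ?_
    have : (n : ℝ) * x l = typ p U l := by simp only [hx]; field_simp
    rw [this]
    exact Nat.choose_le_pow_div _ _
  rw [← mul_sum] at hc2
  refine hc2.trans ?_
  have : (n : ℝ) ^ (k - 1) * ∑ i ∈ Ij a' j, Gm (sv a' j i) x = Fp k a' j x * Ef (k - 1) n := by
    unfold Fp Ef
    field_simp
  rw [this]
  have := Ef_nonneg (k - 1) hn0.le
  gcongr
  linarith

lemma minus_pos {k r n : ℕ} (hk : 3 ≤ k) (hr : 2 ≤ r) (hn : 0 < n)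
    {U : Finset (Fin n)} {p : Fin n → Fin r} {a : Fin r → ℤ} (η : ℝ)
    (hsz : ∀ l, |(typ p U l : ℝ) - (a l * (n / k) - (n / (r * k)))| ≤ η * n)
    (hη1 : η < 1 / (r * k)) (l : Fin r) : 1 ≤ a l ∧ ∃ v ∈ U, p v = l := by
  have hr0 : (0 : ℝ) < r := by exact_mod_cast (by omega : 0 < r)
  have hr2 : (2 : ℝ) ≤ r := by exact_mod_cast hr
  have hk0 : (0 : ℝ) < k := by exact_mod_cast (by omega : 0 < k)
  have hn0 : (0 : ℝ) < n := by exact_mod_cast hn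
  have hηn : η * n < n / (r * k) := by
    have := mul_lt_mul_of_pos_right hη1 hn0
    rwa [div_mul_eq_mul_div, one_mul] at this
  have hrk : (n : ℝ) / k = r * (n / (r * k)) := by field_simp
  have hpos : (0 : ℝ) < n / (r * k) := by positivity
  have h0 : 1 ≤ a l := by
    by_contra hneg
    have h1 : a l ≤ 0 := by omega
    have h1' : (a l : ℝ) ≤ 0 := by exact_mod_cast h1
    have h2 := (abs_le.1 (hsz l)).2
    have h3 : (0 : ℝ) ≤ typ p U l := by positivity
    have h4 : (a l : ℝ) * (n / k) ≤ 0 := mul_nonpos_of_nonpos_of_nonneg h1' (by positivity)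
    linarith
  refine ⟨h0, exists_of_typ_pos ?_⟩
  have h2 := (abs_le.1 (hsz l)).1
  have h1 : (1 : ℝ) ≤ a l := by exact_mod_cast h0
  rw [hrk] at h2
  have h4 : 1 * (2 * (n / (r * k))) ≤ (a l : ℝ) * (r * (n / (r * k))) := by gcongr
  have : (0 : ℝ) < typ p U l := by linarith
  exact_mod_cast this

lemma minus_one {k r n : ℕ} (hk : 3 ≤ k) (hr : 2 ≤ r) (hn : 0 < n)
    {H : Finset (Finset (Fin n))} (hH : HyperUniform k H) {c : Finset (Fin n) → Fin r}
    {U : Finset (Fin n)} {p : Fin n → Fin r} {a : Fin r → ℤ}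
    (hty : ∀ e ∈ H, e ⊆ U → ∀ l, (typ p e l : ℤ) = a l + (-1) * (if c e = l then 1 else 0))
    (η ε : ℝ)
    (hsz : ∀ l, |(typ p U l : ℝ) - (a l * (n / k) - (n / (r * k)))| ≤ η * n)
    (hη1 : η < 1 / (r * k)) (hη0 : 0 < η)
    (hcor : ∀ x, |x - (1 - ((r : ℝ) - 1) / (r * k))| ≤ η →
      x ^ (k - 1) ≤ (1 - ((r : ℝ) - 1) / (r * k)) ^ (k - 1) + ε) (i : Fin r) (hi : a i = 1) :
    ∃ v, ((gl H U v).card : ℝ) ≤ (gThr k r + ε) * Ef (k - 1) n := by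
  have hr0 : (0 : ℝ) < r := by exact_mod_cast (by omega : 0 < r)
  have hr2 : (2 : ℝ) ≤ r := by exact_mod_cast hr
  have hk0 : (0 : ℝ) < k := by exact_mod_cast (by omega : 0 < k)
  have hn0 : (0 : ℝ) < n := by exact_mod_cast hn
  obtain ⟨-, v, hv, hpv⟩ := minus_pos hk hr hn η hsz hη1 i
  refine ⟨v, ?_⟩
  have hsub : gl H U v ⊆ (U.filter (fun x => p x ≠ i)).powersetCard (k - 1) := by
    intro T hT
    rw [mem_powersetCard]
    refine ⟨fun y hy => ?_, gl_card hH hT⟩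
    rw [mem_filter]
    refine ⟨(mem_gl hT).2.2 hy, fun hpy => ?_⟩
    obtain ⟨i', hi'⟩ := gl_typ hty hv hT
    have h1 := hi' i
    rw [if_pos hpv, hi] at h1
    have h2 : 0 < typ p T i := by
      unfold typ; exact card_pos.2 ⟨y, mem_filter.2 ⟨hy, hpy⟩⟩
    split_ifs at h1 <;> omega
  have h1 := card_le_card hsub
  rw [card_powersetCard] at h1
  set m := (U.filter (fun x => p x ≠ i)).card with hm
  have hmU : typ p U i + m ≤ n := by
    have : typ p U i + m = U.card := card_filter_add_card_filter_not _
    rw [this]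
    simpa using card_le_univ U
  have hmU' : (typ p U i : ℝ) + m ≤ n := by exact_mod_cast hmU
  set t : ℝ := 1 - ((r : ℝ) - 1) / (r * k) with ht
  have h2 := (abs_le.1 (hsz i)).1
  rw [hi] at h2
  have hmt : (m : ℝ) ≤ n * (t + η) := by
    have : n * (t + η) = n - (n / k - n / (r * k)) + η * n := by
      rw [ht]; field_simp
    rw [this]
    push_cast at h2
    linarith
  have h3 := hcor (t + η) (by rw [add_sub_cancel_left, abs_of_pos hη0])
  have h4 := gThr_corner hr (show 1 ≤ k by omega)
  calc ((gl H U v).card : ℝ) ≤ (m.choose (k - 1) : ℝ) := by exact_mod_cast h1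
    _ ≤ (m : ℝ) ^ (k - 1) / (k - 1).factorial := Nat.choose_le_pow_div _ _
    _ ≤ (n * (t + η)) ^ (k - 1) / (k - 1).factorial := by gcongr
    _ = (t + η) ^ (k - 1) * Ef (k - 1) n := by unfold Ef; rw [mul_pow]; ring
    _ ≤ _ := by
      have := Ef_nonneg (k - 1) hn0.le
      gcongr
      linarith

lemma pair_bound {k r n : ℕ} (hk : 3 ≤ k)
    {H : Finset (Finset (Fin n))} (hH : HyperUniform k H) {c : Finset (Fin n) → Fin r}
    {U : Finset (Fin n)} {p : Fin n → Fin r} {a : Fin r → ℤ}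
    (hty : ∀ e ∈ H, e ⊆ U → ∀ l, (typ p e l : ℤ) = a l + (-1) * (if c e = l then 1 else 0))
    (ha : ∀ l, 2 ≤ a l) {u v : Fin n} (hu : u ∈ U) (hv : v ∈ U) (huv : p u ≠ p v)
    (j : Fin r) (hj1 : j ≠ p u) (hj2 : j ≠ p v) :
    4 * ((gl H U u ∩ gl H U v).card : ℝ) ≤ Ef (k - 1) n := by
  rcases (gl H U u ∩ gl H U v).eq_empty_or_nonempty with he | ⟨T0, hT0⟩
  · rw [he]; simpa using Ef_nonneg (k - 1) (Nat.cast_nonneg n)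
  have hT : ∀ T ∈ gl H U u ∩ gl H U v, (typ p T (p u) : ℤ) = a (p u) - 1 ∧
      (typ p T (p v) : ℤ) = a (p v) - 1 ∧ (0 < typ p T j) := by
    intro T hT
    rw [mem_inter] at hT
    obtain ⟨i, hi⟩ := gl_typ hty hu hT.1
    obtain ⟨i', hi'⟩ := gl_typ hty hv hT.2
    have e1 := hi (p u)
    have e2 := hi' (p u)
    have e3 := hi (p v)
    have e4 := hi' (p v)
    have e5 := hi j
    have := ha j
    rw [if_pos rfl] at e1 e4
    rw [if_neg huv.symm] at e2
    rw [if_neg huv] at e3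
    rw [if_neg hj1.symm] at e5
    refine ⟨?_, ?_, ?_⟩
    · split_ifs at e1 e2 <;> omega
    · split_ifs at e3 e4 <;> omega
    · split_ifs at e5 <;> omega
  set s := typ p T0 (p u) with hs
  set t := typ p T0 (p v) with ht
  have h0 := hT T0 hT0
  have hs1 : 1 ≤ s := by have := ha (p u); omega
  have ht1 : 1 ≤ t := by have := ha (p v); omega
  set q : Fin n → Fin 3 := fun x => if p x = p u then 0 else if p x = p v then 1 else 2 with hq
  have q0 : ∀ T, typ q T 0 = typ p T (p u) := by
    intro T; unfold typ; congr 1; ext x; simp only [hq, mem_filter]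
    by_cases h1 : p x = p u <;> by_cases h2 : p x = p v <;> simp [h1, h2, huv.symm]
  have q1 : ∀ T, typ q T 1 = typ p T (p v) := by
    intro T; unfold typ; congr 1; ext x; simp only [hq, mem_filter]
    by_cases h1 : p x = p u
    · simp [h1, huv]
    · by_cases h2 : p x = p v <;> simp [h1, h2, huv.symm]
  have q2 : ∀ T, typ p T j ≤ typ q T 2 := by
    intro T; unfold typ
    apply card_le_card
    intro x hx
    rw [mem_filter] at hx ⊢
    refine ⟨hx.1, ?_⟩
    simp only [hq]
    rw [hx.2, if_neg hj1, if_neg hj2]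
  have qs : ∀ T, typ q T 0 + typ q T 1 + typ q T 2 = T.card := by
    intro T; rw [← sum_typ q T, Fin.sum_univ_three]
  have hcT0 : T0.card = k - 1 := gl_card hH (mem_inter.1 hT0).1
  set w := typ q T0 2 with hw
  have hw1 : 1 ≤ w := le_trans h0.2.2 (q2 T0)
  have hstw : s + t + w = k - 1 := by rw [← hcT0, ← qs T0, q0, q1]
  have hsub : gl H U u ∩ gl H U v ⊆
      U.powerset.filter (fun T => ∀ l, typ q T l = ![s, t, w] l) := by
    intro T hTm
    have h1 := hT T hTm
    have hc : T.card = k - 1 := gl_card hH (mem_inter.1 hTm).1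
    rw [mem_filter, mem_powerset]
    refine ⟨(mem_gl (mem_inter.1 hTm).1).2.2, ?_⟩
    have e0 : typ q T 0 = s := by rw [q0]; omega
    have e1 : typ q T 1 = t := by rw [q1]; omega
    have e2 : typ q T 2 = w := by have := qs T; omega
    intro l
    fin_cases l
    · exact e0
    · exact e1
    · exact e2
  have hc := card_le_card hsub
  rw [card_typ, Fin.prod_univ_three] at hc
  simp only [Matrix.cons_val_zero, Matrix.cons_val_one, Matrix.cons_val_two, Matrix.cons_val] at hc
  have hc' : ((gl H U u ∩ gl H U v).card : ℝ) ≤ ((typ q U 0).choose s : ℝ) *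
    ((typ q U 1).choose t : ℝ) * ((typ q U 2).choose w : ℝ) := by exact_mod_cast hc
  have hE : ((typ q U 0).choose s : ℝ) * ((typ q U 1).choose t : ℝ) * ((typ q U 2).choose w : ℝ) ≤
      Ef s (typ q U 0) * Ef t (typ q U 1) * Ef w (typ q U 2) := by
    have n0 := Ef_nonneg s (Nat.cast_nonneg (α := ℝ) (typ q U 0))
    have n1 := Ef_nonneg t (Nat.cast_nonneg (α := ℝ) (typ q U 1))
    have b0 : ((typ q U 0).choose s : ℝ) ≤ Ef s (typ q U 0) := Nat.choose_le_pow_div _ _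
    have b1 : ((typ q U 1).choose t : ℝ) ≤ Ef t (typ q U 1) := Nat.choose_le_pow_div _ _
    have b2 : ((typ q U 2).choose w : ℝ) ≤ Ef w (typ q U 2) := Nat.choose_le_pow_div _ _
    gcongr
  have hQ := Ef_quarter hs1 ht1 hw1 (Nat.cast_nonneg (α := ℝ) (typ q U 0))
    (Nat.cast_nonneg (α := ℝ) (typ q U 1)) (Nat.cast_nonneg (α := ℝ) (typ q U 2))
  rw [hstw] at hQ
  have hUn : ((typ q U 0 : ℝ) + typ q U 1 + typ q U 2) ≤ n := by
    have : typ q U 0 + typ q U 1 + typ q U 2 ≤ n := by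
      rw [qs U]; simpa using card_le_univ U
    exact_mod_cast this
  have hlast : Ef (k - 1) ((typ q U 0 : ℝ) + typ q U 1 + typ q U 2) ≤ Ef (k - 1) n := by
    unfold Ef; gcongr
  linarith

lemma minus_two {k r n : ℕ} (hk : 3 ≤ k) (hr : 3 ≤ r)
    {H : Finset (Finset (Fin n))} (hH : HyperUniform k H) {c : Finset (Fin n) → Fin r}
    {U : Finset (Fin n)} {p : Fin n → Fin r} {a : Fin r → ℤ}
    (hty : ∀ e ∈ H, e ⊆ U → ∀ l, (typ p e l : ℤ) = a l + (-1) * (if c e = l then 1 else 0))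
    (ha : ∀ l, 2 ≤ a l) (hne : ∀ l, ∃ v ∈ U, p v = l) :
    ∃ u v w, ((gl H U u).card : ℝ) + (gl H U v).card + (gl H U w).card ≤
      7 / 4 * Ef (k - 1) n := by
  obtain ⟨u, hu, pu⟩ := hne ⟨0, by omega⟩
  obtain ⟨v, hv, pv⟩ := hne ⟨1, by omega⟩
  obtain ⟨w, hw, pw⟩ := hne ⟨2, by omega⟩
  have huv : p u ≠ p v := by rw [pu, pv]; simp
  have huw : p u ≠ p w := by rw [pu, pw]; simp
  have hvw : p v ≠ p w := by rw [pv, pw]; simp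
  refine ⟨u, v, w, ?_⟩
  have b1 := pair_bound hk hH hty ha hu hv huv (p w) huw.symm hvw.symm
  have b2 := pair_bound hk hH hty ha hu hw huw (p v) huv.symm hvw
  have b3 := pair_bound hk hH hty ha hv hw hvw (p u) huv huw
  set A := gl H U u
  set B := gl H U v
  set C := gl H U w
  have hall := card_unif_le (m := k - 1) (A ∪ B ∪ C) (by
    intro T hT
    rcases mem_union.1 hT with hT | hT
    · rcases mem_union.1 hT with hT | hT
      · exact gl_card hH hT
      · exact gl_card hH hT
    · exact gl_card hH hT)
  have c1 := card_union_add_card_inter (A ∪ B) C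
  have c2 := card_union_add_card_inter A B
  have c3 : ((A ∪ B) ∩ C).card ≤ (A ∩ C).card + (B ∩ C).card := by
    rw [union_inter_distrib_right]; exact card_union_le _ _
  have c4 : A.card + B.card + C.card ≤
      (A ∪ B ∪ C).card + ((A ∩ B).card + (A ∩ C).card + (B ∩ C).card) := by omega
  have c5 : (A.card : ℝ) + B.card + C.card ≤
      (A ∪ B ∪ C).card + ((A ∩ B).card + (A ∩ C).card + (B ∩ C).card) := by exact_mod_cast c4
  linarith


lemma struct_contra {k r n : ℕ} (hk : 3 ≤ k) (hr : 2 ≤ r) (hn : 0 < n)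
    {H M : Finset (Finset (Fin n))} (hH : HyperUniform k H) (hM : IsPM H M)
    {c : Finset (Fin n) → Fin r} {U : Finset (Fin n)}
    (hst : ∃ (p : Fin n → Fin r) (a : Fin r → ℤ),
      (∀ e ∈ H, e ⊆ U → ∀ l, (typ p e l : ℤ) = a l + (if c e = l then 1 else 0)) ∨
      (∀ e ∈ H, e ⊆ U → ∀ l, (typ p e l : ℤ) = a l - (if c e = l then 1 else 0)))
    (δ : ℝ) (hδ : 0 < δ) (hcol : ∀ i, ((M.filter (fun e => c e = i)).card : ℝ) ≤ n / (r * k) + δ * n)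
    (hR : (Uᶜ).card < M.card) (η ε : ℝ) (hη0 : 0 < η) (hη1 : η < 1 / (r * k))
    (hb : (2 * k + 2) * ((Uᶜ).card : ℝ) + r * (δ * n) ≤ η * n)
    (hFp : ∀ a : Fin r → ℕ, ∑ l, a l = k - 1 → ∀ j, ∀ x : Fin r → ℝ,
      (∀ l, |x l - rho k a l| ≤ η) → Fp k a j x ≤ gF k a j + ε)
    (hcor : ∀ x, |x - (1 - ((r : ℝ) - 1) / (r * k))| ≤ η →
      x ^ (k - 1) ≤ (1 - ((r : ℝ) - 1) / (r * k)) ^ (k - 1) + ε) :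
    (∃ v, ((gl H U v).card : ℝ) ≤ (gThr k r + ε) * Ef (k - 1) n) ∨
    (5 ≤ k ∧ ∃ u v w, ((gl H U u).card : ℝ) + (gl H U v).card + (gl H U w).card ≤
      7 / 4 * Ef (k - 1) n) := by
  have hplus : ∀ (p : Fin n → Fin r) (a : Fin r → ℤ),
      (∀ e ∈ H, e ⊆ U → ∀ l, (typ p e l : ℤ) = a l + (if c e = l then 1 else 0)) →
      (∃ v, ((gl H U v).card : ℝ) ≤ (gThr k r + ε) * Ef (k - 1) n) := by
    intro p a hty
    have hty' : ∀ e ∈ H, e ⊆ U → ∀ l, (typ p e l : ℤ) = a l + 1 * (if c e = l then 1 else 0) := by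
      intro e he heU l; rw [hty e he heU l, one_mul]
    obtain ⟨h1, h2⟩ := part_sizes (by omega) hr hH hM c U p a 1 (Or.inl rfl) hty' δ hδ hcol hR
    refine plus_contra hk hr hn hty' h1 η ε (fun l => ?_) hη1 hFp
    have := (h2 l).trans hb
    simpa using this
  obtain ⟨p, a, hty | hty⟩ := hst
  · exact Or.inl (hplus p a hty)
  rcases (by omega : r = 2 ∨ 3 ≤ r) with hr2 | hr3
  · left
    subst hr2
    refine hplus (fun x => Fin.rev (p x)) (fun l => a (Fin.rev l) - 1) ?_
    intro e he heU l
    have h1 : typ (fun x => Fin.rev (p x)) e l = typ p e (Fin.rev l) := by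
      unfold typ
      congr 1
      ext x
      simp only [mem_filter]
      rw [Fin.rev_eq_iff]
    rw [h1, hty e he heU]
    have h3 : ∀ x y : Fin 2, (if x = Fin.rev y then (1 : ℤ) else 0) = 1 - (if x = y then 1 else 0) := by
      decide
    rw [h3]; ring
  · have hty' : ∀ e ∈ H, e ⊆ U → ∀ l,
        (typ p e l : ℤ) = a l + (-1) * (if c e = l then 1 else 0) := by
      intro e he heU l; rw [hty e he heU l]; ring
    obtain ⟨h1, h2⟩ := part_sizes (by omega) hr hH hM c U p a (-1) (Or.inr rfl) hty' δ hδ hcol hR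
    have hsz : ∀ l, |(typ p U l : ℝ) - (a l * (n / k) - (n / (r * k)))| ≤ η * n := by
      intro l
      have := (h2 l).trans hb
      have e1 : ((a l : ℝ) * (n / k) + ((-1 : ℤ) : ℝ) * (n / (r * k))) =
        (a l * (n / k) - (n / (r * k))) := by push_cast; ring
      rwa [e1] at this
    have hpos := minus_pos hk hr hn η hsz hη1
    by_cases h1a : ∃ i, a i = 1
    · obtain ⟨i, hi⟩ := h1a
      exact Or.inl (minus_one hk hr hn hH hty' η ε hsz hη1 hη0 hcor i hi)
    · push Not at h1a
      have ha2 : ∀ l, 2 ≤ a l := fun l => by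
        have := (hpos l).1; have := h1a l; omega
      right
      refine ⟨?_, minus_two hk hr3 hH hty' ha2 (fun l => (hpos l).2)⟩
      have : ∑ l : Fin r, (2 : ℤ) ≤ ∑ l, a l := sum_le_sum fun l _ => ha2 l
      rw [h1] at this
      simp at this
      omega

set_option maxHeartbeats 2000000 in
lemma disc_max {k r : ℕ} (hk : 3 ≤ k) (hr : 2 ≤ r) : DiscProp k r (max (fThr k) (gThr k r)) := by
  intro ε hε
  set h := max (fThr k) (gThr k r) with hh
  set g := gThr k r with hg
  have hfh : fThr k ≤ h := le_max_left _ _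
  have hgh : g ≤ h := le_max_right _ _
  have hhalf := fThr_ge_half k hk
  have hr0 : (0 : ℝ) < r := by exact_mod_cast (by omega : 0 < r)
  have hr2 : (2 : ℝ) ≤ r := by exact_mod_cast hr
  have hk0 : (0 : ℝ) < k := by exact_mod_cast (by omega : 0 < k)
  have hk3 : (3 : ℝ) ≤ k := by exact_mod_cast hk
  have hh0 : 0 < h := by linarith
  -- constants
  obtain ⟨ν, hν0, hν1, hν2⟩ : ∃ ν : ℝ, 0 < ν ∧ ν ≤ ε ∧ ν * (h + ε / 4) ≤ ε / 4 := by
    refine ⟨min ε (ε / 4 / (h + ε / 4)), by positivity, min_le_left _ _, ?_⟩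
    have : min ε (ε / 4 / (h + ε / 4)) * (h + ε / 4) ≤ (ε / 4 / (h + ε / 4)) * (h + ε / 4) := by
      gcongr; exact min_le_right _ _
    rwa [div_mul_cancel₀ _ (by positivity)] at this
  obtain ⟨η₁, hη₁, hF⟩ := cont_Fp (r := r) (show 1 ≤ k by omega) (ε / 4) (by linarith)
  obtain ⟨η₂, hη₂, hC⟩ := cont_corner (k - 1) (1 - ((r : ℝ) - 1) / (r * k)) (ε / 4) (by linarith)
  obtain ⟨η, hη0, hη1, hη2, hη3⟩ : ∃ η : ℝ, 0 < η ∧ η ≤ η₁ ∧ η ≤ η₂ ∧ η < 1 / (r * k) := by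
    refine ⟨min η₁ (min η₂ (1 / (2 * (r * k)))), by positivity, min_le_left _ _,
      (min_le_right _ _).trans (min_le_left _ _), ?_⟩
    refine lt_of_le_of_lt ((min_le_right _ _).trans (min_le_right _ _)) ?_
    apply one_div_lt_one_div_of_lt (by positivity)
    nlinarith [mul_pos hr0 hk0]
  obtain ⟨θ, hθ0, hθ1, hθ2⟩ : ∃ θ : ℝ, 0 < θ ∧ 8 * k * θ ≤ ε ∧ 2 * k * θ ≤ 1 := by
    refine ⟨min (ε / (8 * k)) (1 / (2 * k)), by positivity, ?_, ?_⟩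
    · calc 8 * k * min (ε / (8 * k)) (1 / (2 * k)) ≤ 8 * k * (ε / (8 * k)) := by
            gcongr; exact min_le_left _ _
        _ = ε := by field_simp
    · calc 2 * k * min (ε / (8 * k)) (1 / (2 * k)) ≤ 2 * k * (1 / (2 * k)) := by
            gcongr; exact min_le_right _ _
        _ = 1 := by field_simp
  -- K : bound for the exceptional set is K * S
  set K : ℝ := r * ((k + 1) * k) with hK
  have hK0 : 0 < K := by positivity
  obtain ⟨δ, hδ0, hδ1, hδ2⟩ : ∃ δ : ℝ, 0 < δ ∧ K * (2 * (r * δ)) ≤ θ / 2 ∧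
      (2 * k + 2) * (K * (2 * (r * δ))) + r * δ ≤ η := by
    have hA : 0 < K * (2 * r) := by positivity
    have hB : 0 < (2 * k + 2) * (K * (2 * r)) + r := by positivity
    refine ⟨min (θ / 2 / (K * (2 * r))) (η / ((2 * k + 2) * (K * (2 * r)) + r)),
      by positivity, ?_, ?_⟩
    · have : min (θ / 2 / (K * (2 * r))) (η / ((2 * k + 2) * (K * (2 * r)) + r)) ≤ _ :=
        min_le_left _ _
      rw [le_div_iff₀ hA] at this
      linarith
    · have : min (θ / 2 / (K * (2 * r))) (η / ((2 * k + 2) * (K * (2 * r)) + r)) ≤ _ :=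
        min_le_right _ _
      rw [le_div_iff₀ hB] at this
      linarith
  obtain ⟨n₁, hn₁⟩ := win hk hr h ε hfh hε
  obtain ⟨n₂, hn₂⟩ := exists_pm_of_deg k ε hε
  obtain ⟨n₃, hn₃⟩ := pow_le_choose_eventually k (by omega) ν hν0
  obtain ⟨n₄, hn₄⟩ := exists_nat_ge (1 / (r * δ))
  obtain ⟨n₅, hn₅⟩ := exists_nat_ge (4 * k * k / (θ / 2))
  refine ⟨δ, hδ0, n₁ + n₂ + n₃ + n₄ + n₅ + (4 * k + 4), ?_⟩
  intro n hn hkn H hH hd c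
  have hn0 : 0 < n := by omega
  have hnR : (0 : ℝ) < n := by exact_mod_cast hn0
  have hn4 : (4 * k + 4 : ℝ) ≤ n := by exact_mod_cast (by omega : 4 * k + 4 ≤ n)
  have hrd : 1 ≤ r * δ * n := by
    have h1 : 1 / (r * δ) ≤ n := hn₄.trans (by exact_mod_cast (by omega : n₄ ≤ n))
    rw [div_le_iff₀ (by positivity)] at h1
    linarith
  have h4k : 4 * k * k ≤ θ / 2 * n := by
    have h1 : 4 * k * k / (θ / 2) ≤ n := hn₅.trans (by exact_mod_cast (by omega : n₅ ≤ n))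
    rw [div_le_iff₀ (by positivity)] at h1
    linarith
  set D : ℝ := (((n - 1).choose (k - 1) : ℕ) : ℝ) with hD
  have hD0 : 0 < D := by
    rw [hD]; exact_mod_cast Nat.choose_pos (by omega)
  have hE : Ef (k - 1) n ≤ (1 + ν) * D := by
    have := hn₃ n (by omega)
    unfold Ef
    rw [div_le_iff₀ (by positivity)]
    linarith
  have hE0 := Ef_nonneg (k - 1) hnR.le
  obtain ⟨M, hM⟩ := hn₂ n (by omega) hkn H hH (fun v => le_trans (by gcongr) (hd v))
  set S : ℕ := ⌈(r : ℝ) * (δ * n)⌉₊ with hS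
  have hS1 : (r : ℝ) * (δ * n) ≤ S := Nat.le_ceil _
  have hS2 : (S : ℝ) ≤ 2 * (r * δ) * n := by
    have := Nat.ceil_lt_add_one (show 0 ≤ (r : ℝ) * (δ * n) by positivity)
    rw [← hS] at this
    linarith
  have hKS : K * S ≤ K * (2 * (r * δ)) * n := by
    have := mul_le_mul_of_nonneg_left hS2 hK0.le
    linarith
  have hKS1 : K * S ≤ θ / 2 * n := hKS.trans (by gcongr)
  have hθn : 0 < θ * n := by positivity
  have hθhalf : θ ≤ 1 / 2 := by
    have := mul_le_mul_of_nonneg_right hk3 hθ0.le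
    linarith
  rcases gadget_dichotomy (show 1 ≤ k by omega) H hH c S with
    ⟨i, A, B, hA, hB, hAm, hBm, hAB, hAc, hcnt⟩ | ⟨U, hU, hNG⟩
  · refine hn₁ n (by omega) hkn H hH hd c i A B hA hB hAm hBm hAB S δ θ ?_ hθhalf ?_ hS1 hcnt
    · have : 0 < k * θ := by positivity
      linarith
    · have h1 : (A.card : ℝ) ≤ (k + 1) * S := by exact_mod_cast hAc
      have h2 : (A.card * k : ℝ) ≤ (k + 1) * S * k := by gcongr
      have h3 : ((k : ℝ) + 1) * S * k ≤ K * S := by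
        have : (0 : ℝ) ≤ (k + 1) * S * k := by positivity
        calc ((k : ℝ) + 1) * S * k = 1 * ((k + 1) * S * k) := by ring
          _ ≤ r * ((k + 1) * S * k) := mul_le_mul_of_nonneg_right (by linarith) this
          _ = K * S := by rw [hK]; ring
      linarith
  have hUc : ((Uᶜ).card : ℝ) ≤ K * S := by
    have : ((Uᶜ).card : ℝ) ≤ r * ((k + 1) * S * k) := by exact_mod_cast hU
    rw [hK]; linarith
  have hkθ : 2 * k * θ ≤ ε / 4 := by linarith
  have hP := common_link (h := h + ε) (ν := ν) (θ := θ) hk (by omega) hH hd hE (by linarith) U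
    (by linarith)
  have hUcard : ((Uᶜ).card : ℝ) + U.card = n := by
    have := card_compl_add_card U
    rw [Fintype.card_fin] at this
    exact_mod_cast this
  have hMk := pm_card hH hM
  have hU2 : 2 * k + 2 ≤ U.card := by
    have : (2 * k + 2 : ℝ) ≤ U.card := by
      have : θ / 2 * n ≤ 1 / 2 / 2 * n := by gcongr
      linarith
    exact_mod_cast this
  have hR : (Uᶜ).card < M.card := by
    have : ((Uᶜ).card : ℝ) < M.card := by
      have h1 : k * (θ / 2 * n) ≤ 1 / 4 * n := by
        have : k * (θ / 2) ≤ 1 / 4 := by linarith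
        calc k * (θ / 2 * n) = k * (θ / 2) * n := by ring
          _ ≤ _ := by gcongr
      have h2 : k * ((Uᶜ).card : ℝ) ≤ k * (θ / 2 * n) := by gcongr; linarith
      have h3 : k * ((Uᶜ).card : ℝ) < k * M.card := by linarith
      exact lt_of_mul_lt_mul_left h3 hk0.le
    exact_mod_cast this
  by_contra hcon
  push Not at hcon
  have hcol : ∀ i, ((M.filter (fun e => c e = i)).card : ℝ) ≤ n / (r * k) + δ * n :=
    fun i => (hcon M hM i).le
  have hb : (2 * k + 2) * ((Uᶜ).card : ℝ) + r * (δ * n) ≤ η * n := by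
    have h1 : (2 * k + 2) * ((Uᶜ).card : ℝ) ≤ (2 * k + 2) * (K * (2 * (r * δ)) * n) := by
      gcongr; linarith
    have h2 : ((2 * k + 2) * (K * (2 * (r * δ))) + r * δ) * n ≤ η * n := by gcongr
    linarith
  have hgood : ∀ v, (h + 3 * ε / 4) * D ≤ ((gl H U v).card : ℝ) := by
    intro v
    have := good_count (θ := θ) (by omega) (by omega) hH (hd v) (Uᶜ) (by linarith)
    refine le_trans ?_ this
    gcongr
    linarith
  rcases struct_contra hk hr hn0 hH hM (structural (by omega) (by omega) hH hNG hP hU2) δ hδ0 hcol hR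
    η (ε / 4) hη0 hη3 hb (fun a ha j x hx => hF a ha j x (fun l => (hx l).trans hη1))
    (fun x hx => hC x (hx.trans hη2)) with ⟨v, hv⟩ | ⟨hk5, u, v, w, huvw⟩
  · have h1 := hgood v
    have h2 : (g + ε / 4) * Ef (k - 1) n ≤ (h + ε / 4) * ((1 + ν) * D) := by
      refine mul_le_mul (by linarith) hE hE0 (by linarith)
    have h3 : (h + ε / 4) * ((1 + ν) * D) ≤ (h + ε / 2) * D := by
      rw [← mul_assoc]; gcongr; linarith
    have h4 : (h + ε / 2) * D < (h + 3 * ε / 4) * D :=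
      mul_lt_mul_of_pos_right (by linarith) hD0
    linarith
  · have h1 := hgood u
    have h2 := hgood v
    have h3 := hgood w
    have h5 := fThr_ge_big k hk5
    have h6 : 7 / 4 * ((1 + ν) * D) < 3 * ((h + 3 * ε / 4) * D) := by
      have : 7 / 4 * (1 + ν) < 3 * (h + 3 * ε / 4) := by linarith
      calc 7 / 4 * ((1 + ν) * D) = 7 / 4 * (1 + ν) * D := by ring
        _ < 3 * (h + 3 * ε / 4) * D := by gcongr
        _ = _ := by ring
    linarith

theorem discrepancy_threshold_eq (k r : ℕ) (hk : 3 ≤ k) (hr : 2 ≤ r) :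
    hThr k r = max (fThr k) (gThr k r) := by
  have hhalf := fThr_ge_half k hk
  have hmem : max (fThr k) (gThr k r) ∈ {h : ℝ | 0 < h ∧ DiscProp k r h} :=
    ⟨lt_of_lt_of_le (by linarith) (le_max_left _ _), disc_max hk hr⟩
  unfold hThr
  apply le_antisymm
  · exact csInf_le ⟨0, fun x hx => hx.1.le⟩ hmem
  · refine le_csInf ⟨_, hmem⟩ fun h hh => max_le ?_ ?_
    · exact fThr_le_of_disc k r hk hr h hh.1 hh.2
    · exact gThr_le hr h (gF_le_of_disc hk hr h hh.1 hh.2)
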